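/- arXiv:1312.3411 — 7 statements merged into one kernel-verified Lean document; each statement's English description precedes it below -/
import Mathlib

section
/- Let Δ_n = Δ_{n−1}R_n define the relative Garside element R_n. Then: (a) R_n is square-free; (b) for every 1 ≤ i ≤ n, the generator x_i left-divides R_n if and only if i = n. -/
/-!
Square-freeness passes from `Δ = Δ' * R` to its right divisor `R`. For an old generator `xᵢ` (`i < n`),
`Δ'` ends in `xᵢ`, so `R` cannot begin with `xᵢ`, as otherwise `xᵢ²` would divide `Δ`.
Hence the only generator that can left-divide `R` is the last one, and by the existence of a
left-dividing generator it does so as soon as `R ≠ 1`. If `R = 1`, then `Δ = Δ'` would lie in the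
submonoid generated by the old generators although `x_n` left-divides it. This is excluded by
`lastHom`, a monoid homomorphism to the multiplicative monoid `ℕ` detecting the last generator.
-/

/- Setting: an Artin monoid `Artin m` presented by a Coxeter matrix `m` (entries in ℕ∞),
   with divisibility notions and alternating words/products. -/

namespace RelativeGarside

/-- The alternating word `a b a b ⋯` with `k` letters in the free monoid. -/
def altWord {α : Type*} (a b : α) : ℕ → FreeMonoid α
  | 0 => 1
  | k + 1 => FreeMonoid.of a * altWord b a k

/-- The alternating product `a * b * a * ⋯` with `k` factors in a monoid. -/
def altProd {M : Type*} [Monoid M] (a b : M) : ℕ → M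
  | 0 => 1
  | k + 1 => a * altProd b a k

/-- `a` left-divides `b`. -/
def LeftDvd {M : Type*} [Monoid M] (a b : M) : Prop := ∃ c, b = a * c

/-- `a` right-divides `b`. -/
def RightDvd {M : Type*} [Monoid M] (a b : M) : Prop := ∃ c, b = c * a

/-- `a` divides `b` (two-sidedly). -/
def Dvd2 {M : Type*} [Monoid M] (a b : M) : Prop := ∃ l r, b = l * a * r

/-- `d` is the least common left multiple of the set `X`. -/
def IsLeftLcm {M : Type*} [Monoid M] (X : Set M) (d : M) : Prop :=
  (∀ a ∈ X, LeftDvd a d) ∧ ∀ w, (∀ a ∈ X, LeftDvd a w) → LeftDvd d w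

/-- The defining relations of the Artin monoid of the Coxeter matrix `m`:
`iji⋯ = jij⋯` (`k` factors on both sides) whenever `i ≠ j` and `m i j = k < ∞`. -/
def artinRels {α : Type*} (m : α → α → ℕ∞) : FreeMonoid α → FreeMonoid α → Prop :=
  fun u v => ∃ i j : α, i ≠ j ∧ ∃ k : ℕ, m i j = (k : ℕ∞) ∧
    u = altWord i j k ∧ v = altWord j i k

/-- The Artin monoid of the Coxeter matrix `m`. -/
abbrev Artin {α : Type*} (m : α → α → ℕ∞) := PresentedMonoid (artinRels m)




theorem lift_altWord_eq_one {α : Type*} (f : α → ℕ) (k : ℕ) :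
    ∀ a b : α, f a = 1 → f b = 1 → FreeMonoid.lift f (altWord a b k) = 1 := by
  induction k with
  | zero => intro a b _ _; simp [altWord]
  | succ k ih => intro a b ha hb; simp [altWord, ha, ih b a hb ha]

/-- The homomorphism to the multiplicative monoid `ℕ` sending the last generator to `0` and the
others to `1`: an element goes to `0` exactly when the last generator occurs in it. It respects the
defining relations because both sides of a relation of length `k ≥ 2` involve the same letters. -/
def lastHom {n : ℕ} (m : Fin (n + 1) → Fin (n + 1) → ℕ∞)
    (hoff : ∀ i j : Fin (n + 1), i ≠ j → 2 ≤ m i j) : Artin m →* ℕ :=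
  PresentedMonoid.lift (fun i => if i = Fin.last n then 0 else 1) (by
    rintro _ _ ⟨i, j, hij, k, hk, rfl, rfl⟩
    have h2 : 2 ≤ k := by
      have := hoff i j hij
      rw [hk] at this
      exact_mod_cast this
    obtain ⟨k, rfl⟩ := Nat.exists_eq_add_of_le' h2
    by_cases hi : i = Fin.last n
    · simp [altWord, hi]
    by_cases hj : j = Fin.last n
    · simp [altWord, hj]
    rw [lift_altWord_eq_one _ _ i j (by simp [hi]) (by simp [hj]),
      lift_altWord_eq_one _ _ j i (by simp [hj]) (by simp [hi])])

/-- **Proposition 1 (a),(b)**: the relative Garside element `R` (defined by `Δₙ = Δₙ₋₁ * R`)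
is square free, and a generator `xᵢ` left-divides `R` iff `i = n` (here the vertices of
`Γₙ₋₁` are indexed by `Fin n`, those of `Γₙ` by `Fin (n+1)`, the new vertex being the last). -/
theorem statement0
    (n : ℕ) (m : Fin (n + 1) → Fin (n + 1) → ℕ∞)
    -- Coxeter matrix conditions
    (hdiag : ∀ i, m i i = 1) (hsymm : ∀ i j, m i j = m j i)
    (hoff : ∀ i j : Fin (n + 1), i ≠ j → 2 ≤ m i j)
    -- the generators of the Artin monoid `M(Γₙ)`
    (x : Fin (n + 1) → Artin m) (hx : ∀ i, x i = PresentedMonoid.of (artinRels m) i)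
    -- (i) cancellativity
    (hcancl : ∀ a b c : Artin m, a * b = a * c → b = c)
    (hcancr : ∀ a b c : Artin m, b * a = c * a → b = c)
    -- (ii) the Garside element of `Γₙ₋₁`
    (Δ' : Artin m)
    (hΔ'mem : Δ' ∈ Submonoid.closure (Set.range fun i : Fin n => x i.castSucc))
    (hΔ'lcm : IsLeftLcm (Set.range fun i : Fin n => x i.castSucc) Δ')
    (hΔ'right : ∀ i : Fin n, RightDvd (x i.castSucc) Δ')
    -- (iii) the Garside element of `Γₙ`
    (Δ : Artin m) (hΔlcm : IsLeftLcm (Set.range x) Δ)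
    (hΔsf : ∀ i : Fin (n + 1), ¬ Dvd2 (x i * x i) Δ)
    -- (iv) the bijections `σₙ₋₁` and `σₙ`
    (σ' : Equiv.Perm (Fin n))
    (hσ' : ∀ i : Fin n, x i.castSucc * Δ' = Δ' * x (σ' i).castSucc)
    (σ : Equiv.Perm (Fin (n + 1))) (hσ : ∀ i, x i * Δ = Δ * x (σ i))
    -- (v) every non-identity element is left-divisible by a generator
    (hgen : ∀ w : Artin m, w ≠ 1 → ∃ i, LeftDvd (x i) w)
    -- (vi) Garside's Lemma
    (hGar : ∀ (W : Artin m) (i j : Fin (n + 1)), i ≠ j →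
      LeftDvd (x i) W → LeftDvd (x j) W →
      ∃ k : ℕ, m i j = (k : ℕ∞) ∧ LeftDvd (altProd (x i) (x j) k) W)
    -- the relative Garside element
    (R : Artin m) (hR : Δ = Δ' * R) :
    (∀ i : Fin (n + 1), ¬ Dvd2 (x i * x i) R) ∧
    (∀ i : Fin (n + 1), (LeftDvd (x i) R ↔ i = Fin.last n)) := by
  have hsf : ∀ i : Fin (n + 1), ¬ Dvd2 (x i * x i) R := by
    rintro i ⟨l, r, h⟩
    exact hΔsf i ⟨Δ' * l, r, by rw [hR, h]; simp only [mul_assoc]⟩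
  have hold : ∀ i : Fin n, ¬ LeftDvd (x i.castSucc) R := by
    rintro i ⟨c, hc⟩
    obtain ⟨d, hd⟩ := hΔ'right i
    exact hΔsf i.castSucc ⟨d, c, by rw [hR, hc, hd]; simp only [mul_assoc]⟩
  have hlast : ∀ i, LeftDvd (x i) R → i = Fin.last n := by
    intro i h
    induction i using Fin.lastCases with
    | last => rfl
    | cast i => exact absurd h (hold i)
  have hval : ∀ i, lastHom m hoff (x i) = if i = Fin.last n then 0 else 1 := by
    intro i
    rw [hx]
    rfl
  have hR1 : R ≠ 1 := by
    intro h
    have h1 : lastHom m hoff Δ' = 1 := by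
      have hle : Submonoid.closure (Set.range fun i : Fin n => x i.castSucc) ≤
          MonoidHom.mker (lastHom m hoff) := by
        rw [Submonoid.closure_le]
        rintro _ ⟨i, rfl⟩
        simp [MonoidHom.mem_mker, hval, Fin.castSucc_ne_last]
      exact hle hΔ'mem
    obtain ⟨c, hc⟩ := hΔlcm.1 _ ⟨Fin.last n, rfl⟩
    have h0 : lastHom m hoff Δ = 0 := by rw [hc, map_mul, hval]; simp
    rw [hR, h, mul_one, h1] at h0
    exact one_ne_zero h0
  refine ⟨hsf, fun i => ⟨hlast i, ?_⟩⟩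
  rintro rfl
  obtain ⟨j, hj⟩ := hgen R hR1
  exact hlast j hj ▸ hj

end RelativeGarside
end

section
/- Let Δ_n = Δ_{n−1}R_n define the relative Garside element R_n and let m = σ_n(n). Then: (c) the map σ = σ_n ∘ σ_{n−1}^{−1} is a bijection from {1,…,n−1} onto {1,…,n}∖{m} satisfying x_iR_n = R_nx_{σ(i)} for all 1 ≤ i ≤ n−1; (d) for every 1 ≤ j ≤ n, the generator x_j right-divides R_n if and only if j = m. -/
/-!
Cancelling `Δ'` in `Δ' xᵢ R = x_{σ'⁻¹(i)} Δ = Δ x_{σ(σ'⁻¹(i))} = Δ' R x_{σ(σ'⁻¹(i))}` gives the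
conjugation relation `xᵢ R = R x_{σ(σ'⁻¹(i))}`.

If some `xⱼ` with `j = σ(σ'⁻¹(i))` right-divided `R = Q xⱼ`, then writing `Δ' = P xᵢ` would give
`Δ = P xᵢ R = P R xⱼ = P Q xⱼ²`, contradicting square-freeness. So `x_{σ(n)}` is the only
generator that can right-divide `R`. Since a non-identity element is right-divisible by some
generator (`exists_rightDvd`), it remains to see that `R ≠ 1`, that is `Δ ≠ Δ'`. The
homomorphism `avoid` detects whether a given generator occurs in a word: it separates `Δ'`, a
product of the other generators, from `Δ`, which is left-divisible by the last one.
-/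

/- Setting: an Artin monoid `Artin m` presented by a Coxeter matrix `m` (entries in ℕ∞),
   with divisibility notions and alternating words/products. -/

namespace RelativeGarside

/-- An element of an Artin monoid other than `1` is right-divisible by a generator. -/
lemma exists_rightDvd {α : Type*} (m : α → α → ℕ∞) (w : Artin m) (hw : w ≠ 1) :
    ∃ j, RightDvd (PresentedMonoid.of (artinRels m) j) w := by
  have hmem : w ∈ Submonoid.closure (Set.range (PresentedMonoid.of (artinRels m))) := by
    rw [PresentedMonoid.closure_range_of]
    trivial
  induction hmem using Submonoid.closure_induction_right with
  | one => exact absurd rfl hw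
  | mul_right u _ y hy _ =>
    obtain ⟨j, rfl⟩ := hy
    exact ⟨j, u, rfl⟩

/-- A homomorphism to a commutative monoid with idempotent values on the letters sends an
alternating word with at least two letters to the product of these two values. -/
lemma lift_altWord {α N : Type*} [CommMonoid N] (f : α → N) (hf : ∀ i, f i * f i = f i)
    (k : ℕ) (i j : α) :
    FreeMonoid.lift f (altWord i j (k + 2)) = f i * f j := by
  induction k generalizing i j with
  | zero => simp [altWord]
  | succ k ih =>
    rw [altWord, map_mul, ih j i, FreeMonoid.lift_eval_of, mul_comm (f j), ← mul_assoc, hf]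

open Classical in
/-- The homomorphism to the multiplicative monoid `ℕ` with value `0` on the elements whose words
contain the letter `a` and `1` on the others. It is well defined because both sides of each
braid relation of length at least `2` involve the same two letters. -/
noncomputable def avoid {α : Type*} (m : α → α → ℕ∞) (hoff : ∀ i j : α, i ≠ j → 2 ≤ m i j)
    (a : α) : Artin m →* ℕ :=
  PresentedMonoid.lift (fun i => if i = a then 0 else 1) (by
    rintro _ _ ⟨i, j, hij, k, hk, rfl, rfl⟩
    have h2 : 2 ≤ k := by
      have h := hoff i j hij
      rw [hk] at h
      exact_mod_cast h
    obtain ⟨k, rfl⟩ := Nat.exists_eq_add_of_le' h2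
    rw [lift_altWord _ (fun i => by split_ifs <;> rfl),
      lift_altWord _ (fun i => by split_ifs <;> rfl), mul_comm])

lemma avoid_of_self {α : Type*} (m : α → α → ℕ∞) (hoff : ∀ i j : α, i ≠ j → 2 ≤ m i j)
    (a : α) : avoid m hoff a (PresentedMonoid.of (artinRels m) a) = 0 := by
  simp [avoid]

lemma avoid_of_ne {α : Type*} (m : α → α → ℕ∞) (hoff : ∀ i j : α, i ≠ j → 2 ≤ m i j)
    {a i : α} (h : i ≠ a) : avoid m hoff a (PresentedMonoid.of (artinRels m) i) = 1 := by
  simp [avoid, h]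

/-- **Proposition 1 (c),(d)**: `σ = σₙ ∘ σₙ₋₁⁻¹` is a bijection from `{1,…,n−1}` onto
`{1,…,n} ∖ {m}` (`m = σₙ(n)`) with `xᵢ R = R x_{σ(i)}`, and a generator `xⱼ`
right-divides `R` iff `j = m`. -/
theorem statement1
    (n : ℕ) (m : Fin (n + 1) → Fin (n + 1) → ℕ∞)
    -- Coxeter matrix conditions
    (hdiag : ∀ i, m i i = 1) (hsymm : ∀ i j, m i j = m j i)
    (hoff : ∀ i j : Fin (n + 1), i ≠ j → 2 ≤ m i j)
    -- the generators of the Artin monoid `M(Γₙ)`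
    (x : Fin (n + 1) → Artin m) (hx : ∀ i, x i = PresentedMonoid.of (artinRels m) i)
    -- (i) cancellativity
    (hcancl : ∀ a b c : Artin m, a * b = a * c → b = c)
    (hcancr : ∀ a b c : Artin m, b * a = c * a → b = c)
    -- (ii) the Garside element of `Γₙ₋₁`
    (Δ' : Artin m)
    (hΔ'mem : Δ' ∈ Submonoid.closure (Set.range fun i : Fin n => x i.castSucc))
    (hΔ'lcm : IsLeftLcm (Set.range fun i : Fin n => x i.castSucc) Δ')
    (hΔ'right : ∀ i : Fin n, RightDvd (x i.castSucc) Δ')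
    -- (iii) the Garside element of `Γₙ`
    (Δ : Artin m) (hΔlcm : IsLeftLcm (Set.range x) Δ)
    (hΔsf : ∀ i : Fin (n + 1), ¬ Dvd2 (x i * x i) Δ)
    -- (iv) the bijections `σₙ₋₁` and `σₙ`
    (σ' : Equiv.Perm (Fin n))
    (hσ' : ∀ i : Fin n, x i.castSucc * Δ' = Δ' * x (σ' i).castSucc)
    (σ : Equiv.Perm (Fin (n + 1))) (hσ : ∀ i, x i * Δ = Δ * x (σ i))
    -- (v) every non-identity element is left-divisible by a generator
    (hgen : ∀ w : Artin m, w ≠ 1 → ∃ i, LeftDvd (x i) w)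
    -- (vi) Garside's Lemma
    (hGar : ∀ (W : Artin m) (i j : Fin (n + 1)), i ≠ j →
      LeftDvd (x i) W → LeftDvd (x j) W →
      ∃ k : ℕ, m i j = (k : ℕ∞) ∧ LeftDvd (altProd (x i) (x j) k) W)
    -- the relative Garside element
    (R : Artin m) (hR : Δ = Δ' * R) :
    (Function.Injective (fun i : Fin n => σ ((σ'.symm i).castSucc)) ∧
      Set.range (fun i : Fin n => σ ((σ'.symm i).castSucc)) = {σ (Fin.last n)}ᶜ ∧
      ∀ i : Fin n, x i.castSucc * R = R * x (σ ((σ'.symm i).castSucc))) ∧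
    (∀ j : Fin (n + 1), (RightDvd (x j) R ↔ j = σ (Fin.last n))) := by
  have hconj : ∀ i : Fin n, x i.castSucc * R = R * x (σ ((σ'.symm i).castSucc)) := by
    intro i
    apply hcancl Δ'
    have h := hσ' (σ'.symm i)
    rw [Equiv.apply_symm_apply] at h
    rw [← mul_assoc, ← h, mul_assoc, ← hR, hσ, hR, mul_assoc]
  have honly : ∀ j, RightDvd (x j) R → j = σ (Fin.last n) := by
    rintro j ⟨Q, hQ⟩
    by_contra hj
    obtain ⟨l, rfl⟩ := σ.surjective j
    obtain ⟨k, rfl⟩ := Fin.exists_castSucc_eq.2 (fun h : l = Fin.last n => hj (by rw [h]))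
    obtain ⟨P, hP⟩ := hΔ'right (σ' k)
    have h := hconj (σ' k)
    rw [Equiv.symm_apply_apply] at h
    refine hΔsf (σ k.castSucc) ⟨P * Q, 1, ?_⟩
    calc Δ = P * (x (σ' k).castSucc * R) := by rw [hR, hP, mul_assoc]
      _ = P * (Q * x (σ k.castSucc) * x (σ k.castSucc)) := by rw [h, ← hQ]
      _ = P * Q * (x (σ k.castSucc) * x (σ k.castSucc)) * 1 := by simp only [mul_assoc, mul_one]
  have hR1 : R ≠ 1 := by
    rintro rfl
    rw [mul_one] at hR
    obtain ⟨c, hc⟩ := hΔlcm.1 _ ⟨Fin.last n, rfl⟩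
    have h0 : avoid m hoff (Fin.last n) Δ = 0 := by
      rw [hc, map_mul, hx, avoid_of_self, zero_mul]
    have hle : Submonoid.closure (Set.range fun i : Fin n => x i.castSucc) ≤
        MonoidHom.mker (avoid m hoff (Fin.last n)) := by
      rw [Submonoid.closure_le]
      rintro _ ⟨i, rfl⟩
      change avoid m hoff (Fin.last n) (x i.castSucc) = 1
      rw [hx, avoid_of_ne m hoff (Fin.castSucc_ne_last i)]
    have h1 : avoid m hoff (Fin.last n) Δ' = 1 := hle hΔ'mem
    rw [← hR, h0] at h1
    exact zero_ne_one h1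
  refine ⟨⟨?_, ?_, hconj⟩, fun j => ⟨honly j, ?_⟩⟩
  · intro a b hab
    exact σ'.symm.injective (Fin.castSucc_injective n (σ.injective hab))
  · ext j
    constructor
    · rintro ⟨i, rfl⟩ h
      exact Fin.castSucc_ne_last _ (σ.injective h)
    · intro hj
      obtain ⟨l, rfl⟩ := σ.surjective j
      obtain ⟨k, rfl⟩ := Fin.exists_castSucc_eq.2 (fun h : l = Fin.last n => hj (by rw [h]; rfl))
      exact ⟨σ' k, by simp⟩
  · rintro rfl
    obtain ⟨j, hj⟩ := exists_rightDvd m R hR1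
    rw [← hx] at hj
    exact honly j hj ▸ hj

end RelativeGarside
end

section
/- Let R_n be the relative Garside element defined by Δ_n = Δ_{n−1}R_n. If U_n ∈ M satisfies: (a) x_n left-divides U_n; (b) there exist k ∈ {1,…,n} and a bijection τ from {1,…,n−1} onto {1,…,n}∖{k} such that x_iU_n = U_nx_{τ(i)} for all 1 ≤ i ≤ n−1; (c) ℓ(U_n) ≤ ℓ(V) for every V ∈ M satisfying conditions (a) and (b) (with some k' and bijection τ'); then U_n = R_n. -/
/-!
The element `R` satisfies (a) and (b), and it left-divides every element satisfying (a) and (b);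
minimality of the length then forces equality.

* (b) for `R`: cancel `Δ'` in `xᵢ Δ' R = Δ' R x_{σ(i)}` after moving `xᵢ` through `Δ'`.
* (a) for `R`: some generator left-divides `R`, and it cannot be one of `x₁, …, xₙ₋₁`, as these
  right-divide `Δ'` and `Δ = Δ' R` is square-free. That `R ≠ 1` holds because the support of an
  element of the Artin monoid is well defined, so that `xₙ` does not divide `Δ'`.
* If `U` satisfies (a) and (b), then `Δ' U = U D` for some `D`, because `Δ'` is a word in
  `x₁, …, xₙ₋₁`. Hence `xₙ` left-divides `Δ' U`, as do all the `xᵢ` with `i < n`, so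
  `Δ = Δ' R` left-divides `Δ' U`, and cancelling `Δ'` shows that `R` left-divides `U`.
-/

/- Setting: an Artin monoid `Artin m` presented by a Coxeter matrix `m` (entries in ℕ∞),
   with divisibility notions and alternating words/products. -/

namespace RelativeGarside

theorem map_altWord {α N : Type*} [Monoid N] (f : α → N) (i j : α) (k : ℕ) :
    FreeMonoid.lift f (altWord i j k) = altProd (f i) (f j) k := by
  induction k generalizing i j with
  | zero => simp [altWord, altProd]
  | succ k ih => simp [altWord, altProd, ih]

theorem altProd_of_idem {N : Type*} [CommMonoid N] (a b : N) (ha : a * a = a) (hb : b * b = b)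
    (k : ℕ) : altProd a b (k + 2) = a * b := by
  induction k generalizing a b with
  | zero => simp [altProd]
  | succ k ih =>
    rw [altProd, ih b a hb ha, mul_comm b a, ← mul_assoc, ha]

/-- The support of an element of an Artin monoid is well defined: a generator `a` which
left-divides a product of generators from `S` belongs to `S`. The invariant is the homomorphism
to `(ℕ, *)` sending `a` to `0` and every other generator to `1`. It respects the braid relations
because both sides of each of them, having length at least two, involve both letters. -/
theorem not_leftDvd_of_mem_closure {α : Type*} (m : α → α → ℕ∞)
    (hoff : ∀ i j : α, i ≠ j → 2 ≤ m i j) (a : α) (S : Set α) (ha : a ∉ S) (w : Artin m)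
    (hw : w ∈ Submonoid.closure (PresentedMonoid.of (artinRels m) '' S)) :
    ¬ LeftDvd (PresentedMonoid.of (artinRels m) a) w := by
  classical
  let f : α → ℕ := fun i => if i = a then 0 else 1
  have hidem : ∀ i, f i * f i = f i := fun i => by by_cases h : i = a <;> simp [f, h]
  have hrel : ∀ u v, artinRels m u v → FreeMonoid.lift f u = FreeMonoid.lift f v := by
    rintro _ _ ⟨i, j, hij, k, hk, rfl, rfl⟩
    have h2 : 2 ≤ k := by
      have := hoff i j hij
      rw [hk] at this
      exact_mod_cast this
    obtain ⟨k, rfl⟩ := Nat.exists_eq_add_of_le' h2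
    rw [map_altWord, map_altWord, altProd_of_idem _ _ (hidem i) (hidem j),
      altProd_of_idem _ _ (hidem j) (hidem i), mul_comm]
  let F : Artin m →* ℕ := PresentedMonoid.lift f hrel
  have hF : ∀ i, F (PresentedMonoid.of (artinRels m) i) = f i := fun i =>
    PresentedMonoid.lift_of _ hrel
  have hone : F w = 1 := by
    have hle : Submonoid.closure (PresentedMonoid.of (artinRels m) '' S) ≤ MonoidHom.mker F := by
      rw [Submonoid.closure_le]
      rintro _ ⟨i, hi, rfl⟩
      have hia : i ≠ a := fun h => ha (h ▸ hi)
      change F _ = 1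
      rw [hF]
      simp [f, hia]
    exact hle hw
  rintro ⟨c, rfl⟩
  rw [map_mul, hF] at hone
  simp [f] at hone

/-- If every element of `S` can be moved through `U` from left to right, so can every element of
the submonoid generated by `S`. -/
theorem exists_mul_eq_of_mem_closure {M : Type*} [Monoid M] (S : Set M) (U : M)
    (h : ∀ s ∈ S, ∃ t, s * U = U * t) (w : M) (hw : w ∈ Submonoid.closure S) :
    ∃ t, w * U = U * t := by
  induction hw using Submonoid.closure_induction with
  | mem s hs => exact h s hs
  | one => exact ⟨1, by simp⟩
  | mul a b _ _ iha ihb =>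
    obtain ⟨s, hs⟩ := iha
    obtain ⟨t, ht⟩ := ihb
    exact ⟨s * t, by rw [mul_assoc, ht, ← mul_assoc, hs, mul_assoc]⟩

/-- **Proposition 3**: if `U` is left-divisible by `xₙ`, conjugates the generators
`x₁,…,xₙ₋₁` via a bijection `τ` onto the complement of some `x_k`, and has minimal length
among the elements satisfying these two conditions, then `U = R`. -/
theorem statement3
    (n : ℕ) (m : Fin (n + 1) → Fin (n + 1) → ℕ∞)
    -- Coxeter matrix conditions
    (hdiag : ∀ i, m i i = 1) (hsymm : ∀ i j, m i j = m j i)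
    (hoff : ∀ i j : Fin (n + 1), i ≠ j → 2 ≤ m i j)
    -- the generators of the Artin monoid `M(Γₙ)`
    (x : Fin (n + 1) → Artin m) (hx : ∀ i, x i = PresentedMonoid.of (artinRels m) i)
    -- (i) cancellativity
    (hcancl : ∀ a b c : Artin m, a * b = a * c → b = c)
    (hcancr : ∀ a b c : Artin m, b * a = c * a → b = c)
    -- (ii) the Garside element of `Γₙ₋₁`
    (Δ' : Artin m)
    (hΔ'mem : Δ' ∈ Submonoid.closure (Set.range fun i : Fin n => x i.castSucc))
    (hΔ'lcm : IsLeftLcm (Set.range fun i : Fin n => x i.castSucc) Δ')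
    (hΔ'right : ∀ i : Fin n, RightDvd (x i.castSucc) Δ')
    -- (iii) the Garside element of `Γₙ`
    (Δ : Artin m) (hΔlcm : IsLeftLcm (Set.range x) Δ)
    (hΔsf : ∀ i : Fin (n + 1), ¬ Dvd2 (x i * x i) Δ)
    -- (iv) the bijections `σₙ₋₁` and `σₙ`
    (σ' : Equiv.Perm (Fin n))
    (hσ' : ∀ i : Fin n, x i.castSucc * Δ' = Δ' * x (σ' i).castSucc)
    (σ : Equiv.Perm (Fin (n + 1))) (hσ : ∀ i, x i * Δ = Δ * x (σ i))
    -- (v) every non-identity element is left-divisible by a generator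
    (hgen : ∀ w : Artin m, w ≠ 1 → ∃ i, LeftDvd (x i) w)
    -- (vi) Garside's Lemma
    (hGar : ∀ (W : Artin m) (i j : Fin (n + 1)), i ≠ j →
      LeftDvd (x i) W → LeftDvd (x j) W →
      ∃ k : ℕ, m i j = (k : ℕ∞) ∧ LeftDvd (altProd (x i) (x j) k) W)
    -- the relative Garside element
    (R : Artin m) (hR : Δ = Δ' * R)
    -- the length homomorphism
    (ℓ : Artin m → ℕ) (hℓmul : ∀ a b, ℓ (a * b) = ℓ a + ℓ b) (hℓgen : ∀ i, ℓ (x i) = 1)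
    (U : Artin m)
    -- (a) `xₙ` left-divides `U`
    (hUleft : LeftDvd (x (Fin.last n)) U)
    -- (b) a bijection `τ : {1,…,n−1} → {1,…,n} ∖ {k}` with `xᵢ U = U x_{τ(i)}`
    (k : Fin (n + 1)) (τ : Fin n → Fin (n + 1))
    (hτinj : Function.Injective τ) (hτrange : Set.range τ = {k}ᶜ)
    (hτ : ∀ i : Fin n, x i.castSucc * U = U * x (τ i))
    -- (c) `U` has minimal length among the elements satisfying (a) and (b)
    (hmin : ∀ V : Artin m, LeftDvd (x (Fin.last n)) V →
      (∃ (k' : Fin (n + 1)) (τ' : Fin n → Fin (n + 1)), Function.Injective τ' ∧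
        Set.range τ' = {k'}ᶜ ∧ ∀ i : Fin n, x i.castSucc * V = V * x (τ' i)) →
      ℓ U ≤ ℓ V) :
    U = R := by
  have hR1 : R ≠ 1 := by
    rintro rfl
    rw [mul_one] at hR
    subst hR
    refine not_leftDvd_of_mem_closure m hoff (Fin.last n) (Set.range Fin.castSucc) ?_ Δ ?_
      (hx (Fin.last n) ▸ hΔlcm.1 _ ⟨Fin.last n, rfl⟩)
    · rintro ⟨i, hi⟩
      exact Fin.castSucc_ne_last i hi
    · rw [← Set.range_comp]
      simpa only [hx, Function.comp_def] using hΔ'mem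
  have hRa : LeftDvd (x (Fin.last n)) R := by
    obtain ⟨i, c, hc⟩ := hgen R hR1
    induction i using Fin.lastCases with
    | last => exact ⟨c, hc⟩
    | cast i =>
      obtain ⟨d, hd⟩ := hΔ'right i
      exact (hΔsf i.castSucc ⟨d, c, by rw [hR, hd, hc]; simp only [mul_assoc]⟩).elim
  have hRb : ∀ i : Fin n, x i.castSucc * R = R * x (σ (σ'.symm i).castSucc) := by
    intro i
    apply hcancl Δ'
    have h := hσ' (σ'.symm i)
    rw [Equiv.apply_symm_apply] at h
    rw [← mul_assoc, ← h, mul_assoc, ← hR, hσ, hR, mul_assoc]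
  have hlen : ℓ U ≤ ℓ R := by
    refine hmin R hRa ⟨σ (Fin.last n), fun i => σ (σ'.symm i).castSucc, ?_, ?_, hRb⟩
    · exact σ.injective.comp ((Fin.castSucc_injective n).comp σ'.symm.injective)
    · ext j
      simp only [Set.mem_range, Set.mem_compl_iff, Set.mem_singleton_iff]
      constructor
      · rintro ⟨i, rfl⟩ h
        exact Fin.castSucc_ne_last _ (σ.injective h)
      · intro hj
        have hne : σ.symm j ≠ Fin.last n := fun h => hj (by rw [← h, Equiv.apply_symm_apply])
        obtain ⟨i, hi⟩ := Fin.exists_castSucc_eq.2 hne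
        exact ⟨σ' i, by rw [Equiv.symm_apply_apply, hi, Equiv.apply_symm_apply]⟩
  have hdvd : LeftDvd Δ (Δ' * U) := by
    apply hΔlcm.2
    rintro _ ⟨i, rfl⟩
    induction i using Fin.lastCases with
    | last =>
      obtain ⟨t, ht⟩ := exists_mul_eq_of_mem_closure _ U
        (by rintro _ ⟨i, rfl⟩; exact ⟨_, hτ i⟩) Δ' hΔ'mem
      obtain ⟨c, hc⟩ := hUleft
      exact ⟨c * t, by rw [ht, ← mul_assoc, ← hc]⟩
    | cast i =>
      obtain ⟨c, hc⟩ := hΔ'lcm.1 _ ⟨i, rfl⟩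
      exact ⟨c * U, by rw [← mul_assoc, ← hc]⟩
  obtain ⟨c, hc⟩ := hdvd
  rw [hR, mul_assoc] at hc
  have hU : U = R * c := hcancl _ _ _ hc
  have hc1 : c = 1 := by
    by_contra hne
    obtain ⟨i, d, hd⟩ := hgen c hne
    rw [hU, hd, hℓmul, hℓmul, hℓgen] at hlen
    omega
  rw [hU, hc1, mul_one]

end RelativeGarside
end

section
/- Let R_n be the relative Garside element defined by Δ_n = Δ_{n−1}R_n. If U_n ∈ M satisfies: (a) x_n left-divides U_n; (b) there exist k ∈ {1,…,n} and a bijection τ from {1,…,n−1} onto {1,…,n}∖{k} such that x_iU_n = U_nx_{τ(i)} for all 1 ≤ i ≤ n−1; (c) ℓ(U_n) = ℓ(R_n); then U_n = R_n. -/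
/-!
The element `Δ' * U` is a common left multiple of all generators. The generators `xᵢ` with `i < n`
left-divide it because they left-divide `Δ'`. Since `Δ'` is a product of these generators, and each
of them can be moved across `U`, one has `Δ' * U = U * E` for some `E`
(`exists_mul_eq_of_mem_closure`), and `xₙ` left-divides `U`, hence `Δ' * U`.
Therefore `Δ = Δ' * R` left-divides `Δ' * U`; cancelling gives `U = R * c`, and comparing lengths
forces `c = 1`.
-/

/- Setting: an Artin monoid `Artin m` presented by a Coxeter matrix `m` (entries in ℕ∞),
   with divisibility notions and alternating words/products. -/

namespace RelativeGarside

/-- An element carrying each `a ∈ S` across itself, `a * U = U * a'`, carries the whole submonoid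
generated by `S` across itself. -/
theorem exists_mul_eq_of_mem_closure_s4 {M : Type*} [Monoid M] {S : Set M} {U : M}
    (hS : ∀ a ∈ S, ∃ b, a * U = U * b) {d : M} (hd : d ∈ Submonoid.closure S) :
    ∃ e, d * U = U * e := by
  induction hd using Submonoid.closure_induction with
  | mem a ha => exact hS a ha
  | one => exact ⟨1, by simp⟩
  | mul a b _ _ iha ihb =>
    obtain ⟨e, he⟩ := iha
    obtain ⟨f, hf⟩ := ihb
    exact ⟨e * f, by rw [mul_assoc, hf, ← mul_assoc, he, mul_assoc]⟩

/-- **Proposition 4**: if `U` is left-divisible by `xₙ`, conjugates the generators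
`x₁,…,xₙ₋₁` via a bijection `τ` onto the complement of some `x_k`, and has the same length
as the relative Garside element `R`, then `U = R`. -/
theorem statement4
    (n : ℕ) (m : Fin (n + 1) → Fin (n + 1) → ℕ∞)
    -- Coxeter matrix conditions
    (hdiag : ∀ i, m i i = 1) (hsymm : ∀ i j, m i j = m j i)
    (hoff : ∀ i j : Fin (n + 1), i ≠ j → 2 ≤ m i j)
    -- the generators of the Artin monoid `M(Γₙ)`
    (x : Fin (n + 1) → Artin m) (hx : ∀ i, x i = PresentedMonoid.of (artinRels m) i)
    -- (i) cancellativity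
    (hcancl : ∀ a b c : Artin m, a * b = a * c → b = c)
    (hcancr : ∀ a b c : Artin m, b * a = c * a → b = c)
    -- (ii) the Garside element of `Γₙ₋₁`
    (Δ' : Artin m)
    (hΔ'mem : Δ' ∈ Submonoid.closure (Set.range fun i : Fin n => x i.castSucc))
    (hΔ'lcm : IsLeftLcm (Set.range fun i : Fin n => x i.castSucc) Δ')
    (hΔ'right : ∀ i : Fin n, RightDvd (x i.castSucc) Δ')
    -- (iii) the Garside element of `Γₙ`
    (Δ : Artin m) (hΔlcm : IsLeftLcm (Set.range x) Δ)
    (hΔsf : ∀ i : Fin (n + 1), ¬ Dvd2 (x i * x i) Δ)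
    -- (iv) the bijections `σₙ₋₁` and `σₙ`
    (σ' : Equiv.Perm (Fin n))
    (hσ' : ∀ i : Fin n, x i.castSucc * Δ' = Δ' * x (σ' i).castSucc)
    (σ : Equiv.Perm (Fin (n + 1))) (hσ : ∀ i, x i * Δ = Δ * x (σ i))
    -- (v) every non-identity element is left-divisible by a generator
    (hgen : ∀ w : Artin m, w ≠ 1 → ∃ i, LeftDvd (x i) w)
    -- (vi) Garside's Lemma
    (hGar : ∀ (W : Artin m) (i j : Fin (n + 1)), i ≠ j →
      LeftDvd (x i) W → LeftDvd (x j) W →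
      ∃ k : ℕ, m i j = (k : ℕ∞) ∧ LeftDvd (altProd (x i) (x j) k) W)
    -- the relative Garside element
    (R : Artin m) (hR : Δ = Δ' * R)
    -- the length homomorphism
    (ℓ : Artin m → ℕ) (hℓmul : ∀ a b, ℓ (a * b) = ℓ a + ℓ b) (hℓgen : ∀ i, ℓ (x i) = 1)
    (U : Artin m)
    -- (a) `xₙ` left-divides `U`
    (hUleft : LeftDvd (x (Fin.last n)) U)
    -- (b) a bijection `τ : {1,…,n−1} → {1,…,n} ∖ {k}` with `xᵢ U = U x_{τ(i)}`
    (k : Fin (n + 1)) (τ : Fin n → Fin (n + 1))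
    (hτinj : Function.Injective τ) (hτrange : Set.range τ = {k}ᶜ)
    (hτ : ∀ i : Fin n, x i.castSucc * U = U * x (τ i))
    -- (c) `U` has the expected length
    (hlen : ℓ U = ℓ R) :
    U = R := by
  obtain ⟨E, hE⟩ : ∃ E, Δ' * U = U * E :=
    exists_mul_eq_of_mem_closure_s4 (by rintro _ ⟨i, rfl⟩; exact ⟨_, hτ i⟩) hΔ'mem
  have hdvd : ∀ a ∈ Set.range x, LeftDvd a (Δ' * U) := by
    rintro _ ⟨i, rfl⟩
    induction i using Fin.lastCases with
    | last =>
      obtain ⟨c, hc⟩ := hUleft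
      exact ⟨c * E, by rw [hE, hc, mul_assoc]⟩
    | cast i =>
      obtain ⟨c, hc⟩ := hΔ'lcm.1 _ ⟨i, rfl⟩
      exact ⟨c * U, by rw [hc, mul_assoc]⟩
  obtain ⟨c, hc⟩ := hΔlcm.2 _ hdvd
  have hUc : U = R * c := hcancl Δ' _ _ (by rw [hc, hR, mul_assoc])
  have hc0 : ℓ c = 0 := by
    have h := hℓmul R c
    rw [← hUc, hlen] at h
    omega
  have hc1 : c = 1 := by
    by_contra hne
    obtain ⟨i, d, hd⟩ := hgen c hne
    rw [hd, hℓmul, hℓgen] at hc0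
    omega
  rw [hUc, hc1, mul_one]

end RelativeGarside
end

section
/- In the Artin monoid of type A_n, the element Δ = x_1(x_2x_1)(x_3x_2x_1)⋯(x_nx_{n−1}⋯x_1), i.e., the product over k = 1,…,n of the descending blocks x_kx_{k−1}⋯x_1, is the least common left multiple of the generators {x_1,…,x_n}: each x_i left-divides Δ, and every element left-divisible by each of x_1,…,x_n is left-divisible by Δ. -/
/-!
The heart of the argument is Garside's lemma (`forkBelow`): if `xᵢ a = xⱼ b`, then `a` and `b`
arise from the braid relation between `xᵢ` and `xⱼ` followed by a common right factor. In
particular the monoid is left cancellative, and any two generators have a least common multiple.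
The lemma is proved by induction on length. For a fixed length, the pairs of words satisfying it
contain the braid relations and are stable under concatenation; transitivity is the cube condition
`Fork.trans`, a case check on triples of generators that uses the lemma in smaller
lengths. Hence it holds along every derivation of an equality of words (`headFork_of_rel`).

Write `Δ_k` for the product of the first `k` descending blocks (`garside`) and `B_k` for the block
`x_{k-1} ⋯ x_0`, with indices from `0`, so that `Δ_{k+1} = Δ_k B_{k+1}` and, for `k ≥ 1`,
`Δ_{k+1} = Δ_{k-1} B_k B_{k+1}`. As `x_k` commutes with `Δ_{k-1}`, it divides `Δ_{k+1}`
because it divides `B_k B_{k+1}`.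
Conversely, let `x_0, …, x_k` divide `w`. By induction `w = Δ_k v = Δ_{k-1} B_k v`; Garside's lemma
removes the factor `Δ_{k-1}`, so `x_k` divides `B_k v`, and a second induction (`block_dvd`) shows
that `B_{k+1}` divides `v`, i.e. `Δ_{k+1}` divides `w`.
-/

namespace ArtinA

/-- The braid relations of type `Aₙ` on `n` generators `x₁,…,xₙ` (indexed by `Fin n`,
index `i` corresponding to `x_{i+1}`): `xᵢxⱼ = xⱼxᵢ` for `|i−j| ≥ 2` and
`xᵢx_{i+1}xᵢ = x_{i+1}xᵢx_{i+1}`. -/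
def rels (n : ℕ) : FreeMonoid (Fin n) → FreeMonoid (Fin n) → Prop := fun u v =>
  (∃ i j : Fin n, (i : ℕ) + 2 ≤ (j : ℕ) ∧ u = .of i * .of j ∧ v = .of j * .of i) ∨
  (∃ i j : Fin n, (i : ℕ) + 1 = (j : ℕ) ∧
    u = .of i * .of j * .of i ∧ v = .of j * .of i * .of j)

/-- The Artin monoid of type `Aₙ` (the positive braid monoid on `n+1` strands). -/
abbrev M (n : ℕ) := PresentedMonoid (rels n)

/-- The generator `x_{i+1}`. -/
def x {n : ℕ} (i : Fin n) : M n := PresentedMonoid.of (rels n) i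

/-- The generator `x_{i+1}` as a function of a natural number (`1` out of range). -/
def X (n : ℕ) (i : ℕ) : M n := if h : i < n then x ⟨i, h⟩ else 1

/-- `a` left-divides `b`. -/
def LeftDvd {P : Type*} [Monoid P] (a b : P) : Prop := ∃ c, b = a * c

/-- `d` is the least common left multiple of the set `S`. -/
def IsLeftLcm {P : Type*} [Monoid P] (S : Set P) (d : P) : Prop :=
  (∀ a ∈ S, LeftDvd a d) ∧ ∀ w, (∀ a ∈ S, LeftDvd a w) → LeftDvd d w

/-- The descending block `x_{k+1}x_k⋯x_1` (with `0`-based indices, `x k * ⋯ * x 0`). -/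
def desc (n k : ℕ) : M n := (((List.range (k + 1)).reverse).map (X n)).prod

/-- The Garside element `Δ = x₁(x₂x₁)(x₃x₂x₁)⋯(xₙx_{n−1}⋯x₁)` of type `Aₙ`. -/
def delta (n : ℕ) : M n := ((List.range n).map (desc n)).prod

/-! ### Relations and length -/

/-- The generators `xᵢ` and `xⱼ` are far apart, i.e. they commute in a braid relation. -/
def Far {n : ℕ} (i j : Fin n) : Prop := (i : ℕ) + 2 ≤ j ∨ (j : ℕ) + 2 ≤ i

/-- The generators `xᵢ` and `xⱼ` are neighbours, i.e. they satisfy the cubic braid relation. -/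
def Adj {n : ℕ} (i j : Fin n) : Prop := (i : ℕ) + 1 = j ∨ (j : ℕ) + 1 = i

theorem Far.symm {n : ℕ} {i j : Fin n} (h : Far i j) : Far j i := Or.symm h

theorem Adj.symm {n : ℕ} {i j : Fin n} (h : Adj i j) : Adj j i := Or.symm h

theorem Far.mul {n : ℕ} {i j : Fin n} (h : Far i j) (c : M n) :
    x i * (x j * c) = x j * (x i * c) := by
  have key : ∀ i j : Fin n, (i : ℕ) + 2 ≤ j → x i * x j = x j * x i := fun i j h =>
    PresentedMonoid.mk_eq_mk_iff.2 (ConGen.Rel.of _ _ (Or.inl ⟨i, j, h, rfl, rfl⟩))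
  rw [← mul_assoc, ← mul_assoc]
  rcases h with h | h
  · rw [key i j h]
  · rw [key j i h]

theorem Adj.mul {n : ℕ} {i j : Fin n} (h : Adj i j) (c : M n) :
    x i * (x j * (x i * c)) = x j * (x i * (x j * c)) := by
  have key : ∀ i j : Fin n, (i : ℕ) + 1 = j → x i * x j * x i = x j * x i * x j := fun i j h =>
    PresentedMonoid.mk_eq_mk_iff.2 (ConGen.Rel.of _ _ (Or.inr ⟨i, j, h, rfl, rfl⟩))
  simp only [← mul_assoc]
  rcases h with h | h
  · rw [key i j h]
  · rw [key j i h]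

/-- Word length as a homomorphism; it is well defined because the braid relations are
homogeneous. -/
def lenHom (n : ℕ) : M n →* Multiplicative ℕ :=
  PresentedMonoid.lift (fun _ => Multiplicative.ofAdd 1) (by
    rintro u v (⟨i, j, -, rfl, rfl⟩ | ⟨i, j, -, rfl, rfl⟩) <;> simp)

/-- The length of an element of the Artin monoid. -/
def len {n : ℕ} (a : M n) : ℕ := (lenHom n a).toAdd

theorem len_x_mul {n : ℕ} (i : Fin n) (a : M n) : len (x i * a) = len a + 1 := by
  have : lenHom n (x i) = Multiplicative.ofAdd 1 := rfl
  simp [len, this, add_comm]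

theorem len_mul {n : ℕ} (a b : M n) : len (a * b) = len a + len b := by
  simp [len]

/-! ### The lcm of two generators -/

/-- What an equality `xᵢ a = xⱼ b` should imply: `a` and `b` are the complements of `xᵢ` and `xⱼ`
in their least common multiple, times a common right factor `c`. -/
def Fork {n : ℕ} (i j : Fin n) (a b : M n) : Prop :=
  (i = j ∧ a = b) ∨ (Far i j ∧ ∃ c, a = x j * c ∧ b = x i * c) ∨
    (Adj i j ∧ ∃ c, a = x j * (x i * c) ∧ b = x i * (x j * c))

theorem Fork.symm {n : ℕ} {i j : Fin n} {a b : M n} (h : Fork i j a b) : Fork j i b a := by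
  rcases h with ⟨h, h'⟩ | ⟨h, c, ha, hb⟩ | ⟨h, c, ha, hb⟩
  · exact Or.inl ⟨h.symm, h'.symm⟩
  · exact Or.inr (Or.inl ⟨h.symm, c, hb, ha⟩)
  · exact Or.inr (Or.inr ⟨h.symm, c, hb, ha⟩)

theorem Fork.mul_right {n : ℕ} {i j : Fin n} {a b : M n} (h : Fork i j a b) (r : M n) :
    Fork i j (a * r) (b * r) := by
  rcases h with ⟨h, h'⟩ | ⟨h, c, ha, hb⟩ | ⟨h, c, ha, hb⟩
  · exact Or.inl ⟨h, by rw [h']⟩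
  · exact Or.inr (Or.inl ⟨h, c * r, by simp [ha, mul_assoc], by simp [hb, mul_assoc]⟩)
  · exact Or.inr (Or.inr ⟨h, c * r, by simp [ha, mul_assoc], by simp [hb, mul_assoc]⟩)

/-- The lcm property of pairs of generators, for cofactors of length less than `N`. -/
def ForkBelow (n N : ℕ) : Prop :=
  ∀ (i j : Fin n) (a b : M n), len a < N → x i * a = x j * b → Fork i j a b

theorem ForkBelow.cancel {n N : ℕ} (H : ForkBelow n N) {i : Fin n} {a b : M n} (hl : len a < N)
    (h : x i * a = x i * b) : a = b := by
  rcases H i i a b hl h with ⟨-, h⟩ | ⟨h, -⟩ | ⟨h, -⟩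
  · exact h
  · simp [Far] at h
  · simp [Adj] at h

theorem ForkBelow.far {n N : ℕ} (H : ForkBelow n N) {i j : Fin n} (hij : Far i j) {a b : M n}
    (h : x i * a = x j * b) (hl : len a < N) : ∃ c, a = x j * c ∧ b = x i * c := by
  rcases H i j a b hl h with ⟨h, -⟩ | ⟨-, h⟩ | ⟨h, -⟩
  · simp [h, Far] at hij
  · exact h
  · simp only [Far, Adj] at h hij; omega

theorem ForkBelow.adj {n N : ℕ} (H : ForkBelow n N) {i j : Fin n} (hij : Adj i j) {a b : M n}
    (h : x i * a = x j * b) (hl : len a < N) :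
    ∃ c, a = x j * (x i * c) ∧ b = x i * (x j * c) := by
  rcases H i j a b hl h with ⟨h, -⟩ | ⟨h, -⟩ | ⟨-, h⟩
  · simp [h, Adj] at hij
  · simp only [Far, Adj] at h hij; omega
  · exact h

/-- The cube condition when `x_s` commutes with the middle generator `x_t`. -/
theorem Fork.trans_far {n N : ℕ} (H : ForkBelow n N) {s t u : Fin n} {a d b : M n}
    (hd : len d ≤ N) (hst : Far s t) (h₁ : ∃ e, a = x t * e ∧ d = x s * e)
    (h₂ : Fork t u d b) : Fork s u a b := by
  obtain ⟨e, rfl, rfl⟩ := h₁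
  rw [len_x_mul] at hd
  rcases h₂ with ⟨rfl, rfl⟩ | ⟨htu, f, h, rfl⟩ | ⟨htu, f, h, rfl⟩
  · exact Or.inr (Or.inl ⟨hst, e, rfl, rfl⟩)
  · rcases H s u e f (by omega) h with ⟨rfl, rfl⟩ | ⟨hsu, g, rfl, rfl⟩ | ⟨hsu, g, rfl, rfl⟩
    · exact Or.inl ⟨rfl, rfl⟩
    · exact Or.inr (Or.inl ⟨hsu, x t * g, htu.mul g, hst.symm.mul g⟩)
    · refine Or.inr (Or.inr ⟨hsu, x t * g, ?_, ?_⟩)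
      · rw [htu.mul, hst.symm.mul]
      · rw [hst.symm.mul, htu.mul]
  · rcases H s u e _ (by omega) h with ⟨rfl, rfl⟩ | ⟨hsu, g, rfl, hg⟩ | ⟨hsu, g, rfl, hg⟩
    · simp only [Far, Adj] at hst htu; omega
    · rw [len_x_mul] at hd
      have := congrArg len hg
      simp only [len_x_mul] at this
      obtain ⟨h', rfl, rfl⟩ := H.far hst.symm hg (by omega)
      refine Or.inr (Or.inl ⟨hsu, x t * (x u * h'), ?_, ?_⟩)
      · rw [htu.mul]
      · rw [hsu.symm.mul, hst.symm.mul]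
    · have := congrArg len hg
      simp only [len_x_mul] at this hd
      obtain ⟨h', rfl, hu⟩ := H.far hst.symm hg (by omega)
      have hu' := congrArg len hu
      simp only [len_x_mul] at this hu'
      obtain ⟨k, rfl, rfl⟩ := H.adj htu.symm hu (by omega)
      refine Or.inr (Or.inr ⟨hsu, x t * (x u * (x s * k)), ?_, ?_⟩)
      · rw [hst.mul, htu.mul, ← hsu.mul, hst.symm.mul]
      · rw [← hsu.mul, hst.symm.mul, hst.mul k, htu.mul]

/-- The cube condition: the lcm property of pairs of generators is inherited along a chain
`x_s a = x_t d = x_u b`, given the property for shorter cofactors. -/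
theorem Fork.trans {n N : ℕ} (H : ForkBelow n N) {s t u : Fin n} {a d b : M n}
    (hd : len d ≤ N) (h₁ : Fork s t a d) (h₂ : Fork t u d b) : Fork s u a b := by
  rcases h₁ with ⟨rfl, rfl⟩ | ⟨hst, h⟩ | ⟨hst, e, ha, hde⟩
  · exact h₂
  · exact Fork.trans_far H hd hst h h₂
  rcases h₂ with ⟨rfl, rfl⟩ | ⟨htu, f, hdf, hb⟩ | ⟨htu, f, hdf, hb⟩
  · exact Or.inr (Or.inr ⟨hst, e, ha, hde⟩)
  · exact (Fork.trans_far H hd htu.symm ⟨f, hb, hdf⟩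
      (Fork.symm (Or.inr (Or.inr ⟨hst, e, ha, hde⟩)))).symm
  · subst ha hb hde
    have hl := congrArg len hdf
    simp only [len_x_mul] at hl hd
    -- Two neighbours of `t` are equal or far apart: the Coxeter graph is a path.
    by_cases hsu : s = u
    · subst hsu
      have h := H.cancel (by rw [len_x_mul]; omega) hdf
      have h := H.cancel (by omega) h
      exact Or.inl ⟨rfl, by rw [h]⟩
    have hsu : Far s u := by
      rw [Fin.ext_iff] at hsu; simp only [Far, Adj] at *; omega
    obtain ⟨g, hg₁, hg₂⟩ := H.far hsu hdf (by rw [len_x_mul]; omega)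
    obtain ⟨h, rfl, rfl⟩ := H.adj htu hg₁ (by omega)
    obtain ⟨k, rfl, hk⟩ := H.adj hst.symm hg₂ (by omega)
    simp only [len_x_mul] at hd hl
    have hk' := congrArg len hk
    simp only [len_x_mul] at hk'
    have hk := H.cancel (by rw [len_x_mul]; omega) hk
    obtain ⟨m, rfl, rfl⟩ := H.far hsu.symm hk (by omega)
    refine Or.inr (Or.inl ⟨hsu, x t * (x u * (x s * (x t * m))), ?_, ?_⟩)
    · rw [hsu.mul, hst.mul, htu.mul]
    · rw [hsu.symm.mul, htu.symm.mul, hst.symm.mul, hsu.mul]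

/-- The class in the Artin monoid of a word in the generators. -/
abbrev cls {n : ℕ} (u : FreeMonoid (Fin n)) : M n := PresentedMonoid.mk (rels n) u

/-- The lcm property of the first letters of two words. -/
def HeadFork {n : ℕ} (u v : FreeMonoid (Fin n)) : Prop :=
  (u = 1 ∧ v = 1) ∨ ∃ i j a b, u = .of i * a ∧ v = .of j * b ∧ Fork i j (cls a) (cls b)

theorem cls_of_mul {n : ℕ} (i : Fin n) (u : FreeMonoid (Fin n)) :
    cls (.of i * u) = x i * cls u := rfl

theorem headFork_refl {n : ℕ} (u : FreeMonoid (Fin n)) : HeadFork u u := by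
  induction u using FreeMonoid.casesOn with
  | one => exact Or.inl ⟨rfl, rfl⟩
  | of_mul i a => exact Or.inr ⟨i, i, a, a, rfl, rfl, Or.inl ⟨rfl, rfl⟩⟩

/-- Given the lcm property for cofactors of length less than `N`, equal words of length at most
`N + 1` have it at their first letters: induction along a derivation from the braid relations. -/
theorem headFork_of_rel {n N : ℕ} (H : ForkBelow n N) {u v : FreeMonoid (Fin n)}
    (h : ConGen.Rel (rels n) u v) : len (cls u) ≤ N + 1 → HeadFork u v := by
  induction h with
  | of u v h =>
    intro _
    rcases h with ⟨i, j, hij, rfl, rfl⟩ | ⟨i, j, hij, rfl, rfl⟩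
    · exact Or.inr ⟨i, j, .of j, .of i, rfl, rfl, Or.inr (Or.inl ⟨Or.inl hij, 1, rfl, rfl⟩)⟩
    · exact Or.inr ⟨i, j, .of j * .of i, .of i * .of j, rfl, rfl,
        Or.inr (Or.inr ⟨Or.inl hij, 1, rfl, rfl⟩)⟩
  | refl u => exact fun _ => headFork_refl u
  | @symm u v h ih =>
    intro hl
    have e : cls u = cls v := PresentedMonoid.mk_eq_mk_iff.2 h
    rcases ih (by rwa [e]) with ⟨hu, hv⟩ | ⟨i, j, a, b, hu, hv, hf⟩
    · exact Or.inl ⟨hv, hu⟩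
    · exact Or.inr ⟨j, i, b, a, hv, hu, hf.symm⟩
  | @trans u v w h h' ih ih' =>
    intro hl
    have e : cls u = cls v := PresentedMonoid.mk_eq_mk_iff.2 h
    rcases ih hl with ⟨rfl, rfl⟩ | ⟨i, j, a, b, rfl, rfl, hf⟩
    · exact ih' hl
    rw [e] at hl
    rcases ih' hl with ⟨h1, -⟩ | ⟨k, l, c, d, hv, rfl, hf'⟩
    · exact absurd h1 (List.cons_ne_nil _ _)
    obtain ⟨rfl, rfl⟩ : j = k ∧ b = c := List.cons.inj hv
    rw [cls_of_mul, len_x_mul] at hl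
    exact Or.inr ⟨i, l, a, d, rfl, rfl, hf.trans H (by omega) hf'⟩
  | @mul u v u' v' h h' ih ih' =>
    intro hl
    have e' : cls u' = cls v' := PresentedMonoid.mk_eq_mk_iff.2 h'
    have hl' : len (cls u) + len (cls u') ≤ N + 1 := by rwa [← len_mul]
    rcases ih (by omega) with ⟨rfl, rfl⟩ | ⟨i, j, a, b, rfl, rfl, hf⟩
    · simpa using ih' (by omega)
    · refine Or.inr ⟨i, j, a * u', b * v', mul_assoc _ _ _, mul_assoc _ _ _, ?_⟩
      have := hf.mul_right (cls u')
      nth_rewrite 2 [e'] at this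
      exact this

/-- Garside's lemma. -/
theorem forkBelow (n N : ℕ) : ForkBelow n N := by
  induction N with
  | zero => exact fun _ _ _ _ h => absurd h (Nat.not_lt_zero _)
  | succ N H =>
    intro i j a b hl h
    obtain ⟨u, rfl⟩ := PresentedMonoid.surjective_mk a
    obtain ⟨v, rfl⟩ := PresentedMonoid.surjective_mk b
    have hr : ConGen.Rel (rels n) (.of i * u) (.of j * v) :=
      (Con.eq (conGen (rels n))).1 h
    rcases headFork_of_rel H hr (by rw [cls_of_mul, len_x_mul]; exact hl) with
      ⟨h1, -⟩ | ⟨i', j', u', v', hu, hv, hf⟩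
    · exact absurd h1 (List.cons_ne_nil _ _)
    · obtain ⟨rfl, rfl⟩ : i = i' ∧ u = u' := List.cons.inj hu
      obtain ⟨rfl, rfl⟩ : j = j' ∧ v = v' := List.cons.inj hv
      exact hf

/-! ### Generators indexed by natural numbers -/

theorem X_of_lt {n i : ℕ} (h : i < n) : X n i = x ⟨i, h⟩ := dif_pos h

/-- Out of range `X n i = 1`, so no bound on the indices is needed. -/
theorem X_comm {n i j : ℕ} (h : i + 2 ≤ j) : Commute (X n j) (X n i) := by
  by_cases hj : j < n
  · have hi : i < n := by omega
    rw [X_of_lt hi, X_of_lt hj]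
    simpa [Commute, SemiconjBy] using Far.mul (i := ⟨j, hj⟩) (j := ⟨i, hi⟩) (Or.inr h) 1
  · simp [X, hj]

theorem X_braid {n i : ℕ} (h : i + 1 < n) (c : M n) :
    X n i * (X n (i + 1) * (X n i * c)) = X n (i + 1) * (X n i * (X n (i + 1) * c)) := by
  rw [X_of_lt h, X_of_lt (show i < n by omega)]
  exact Adj.mul (Or.inl rfl) c

theorem X_cancel {n i : ℕ} {a b : M n} (h : X n i * a = X n i * b) : a = b := by
  by_cases hi : i < n
  · rw [X_of_lt hi] at h
    exact (forkBelow n _).cancel (Nat.lt_succ_self _) h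
  · simpa [X, hi] using h

theorem X_dvd_of_far {n i j : ℕ} (hij : i + 2 ≤ j) (hj : j < n) {v : M n}
    (h : LeftDvd (X n j) (X n i * v)) : LeftDvd (X n j) v := by
  obtain ⟨c, hc⟩ := h
  have hi : i < n := by omega
  rw [X_of_lt hi, X_of_lt hj] at hc
  obtain ⟨d, hd, -⟩ := (forkBelow n _).far (Or.inl hij) hc (Nat.lt_succ_self _)
  exact ⟨d, by rw [X_of_lt hj]; exact hd⟩

theorem X_adj {n i : ℕ} (hi : i + 1 < n) {a b : M n} (h : X n i * a = X n (i + 1) * b) :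
    ∃ c, a = X n (i + 1) * (X n i * c) := by
  have hi' : i < n := by omega
  rw [X_of_lt hi, X_of_lt hi'] at *
  obtain ⟨d, hd, -⟩ := (forkBelow n _).adj (Or.inl rfl) h (Nat.lt_succ_self _)
  exact ⟨d, hd⟩

/-! ### Descending blocks -/

/-- The block `x_{k-1} ⋯ x_0` with `k` letters (indices from `0`), empty for `k = 0`. -/
def block (n : ℕ) : ℕ → M n
  | 0 => 1
  | k + 1 => X n k * block n k

/-- The product of the first `k` nonempty blocks, i.e. the Garside element of the first `k`
generators. -/
def garside (n : ℕ) : ℕ → M n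
  | 0 => 1
  | k + 1 => garside n k * block n (k + 1)

theorem desc_eq (n k : ℕ) : desc n k = block n (k + 1) := by
  have : ∀ k, (((List.range k).reverse).map (X n)).prod = block n k := by
    intro k
    induction k with
    | zero => rfl
    | succ k ih => simp only [List.range_succ, List.reverse_append, List.reverse_singleton,
        List.singleton_append, List.map_cons, List.prod_cons, ih, block]
  exact this (k + 1)

theorem delta_eq (n : ℕ) : delta n = garside n n := by
  have : ∀ k, ((List.range k).map (desc n)).prod = garside n k := by
    intro k
    induction k with
    | zero => rfl
    | succ k ih => simp [List.range_succ, ih, garside, desc_eq]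
  exact this n

theorem X_block_comm {n j k : ℕ} (h : k + 1 ≤ j) : Commute (X n j) (block n k) := by
  induction k with
  | zero => exact Commute.one_right _
  | succ k ih => exact (X_comm (by omega)).mul_right (ih (by omega))

theorem X_garside_comm {n j k : ℕ} (h : k + 1 ≤ j) : Commute (X n j) (garside n k) := by
  induction k with
  | zero => exact Commute.one_right _
  | succ k ih => exact (ih (by omega)).mul_right (X_block_comm h)

theorem X_dvd_of_block {n j k : ℕ} (h : k + 1 ≤ j) (hj : j < n) {v : M n}
    (hd : LeftDvd (X n j) (block n k * v)) : LeftDvd (X n j) v := by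
  induction k with
  | zero => simpa [block] using hd
  | succ k ih =>
    rw [block, mul_assoc] at hd
    exact ih (by omega) (X_dvd_of_far (by omega) hj hd)

theorem X_dvd_of_garside {n j k : ℕ} (h : k + 1 ≤ j) (hj : j < n) {v : M n}
    (hd : LeftDvd (X n j) (garside n k * v)) : LeftDvd (X n j) v := by
  induction k generalizing v with
  | zero => simpa [garside] using hd
  | succ k ih =>
    rw [garside, mul_assoc] at hd
    exact X_dvd_of_block h hj (ih (by omega) hd)

/-! ### The Garside element as a least common multiple -/

theorem X_dvd_block_mul {n k : ℕ} (hk : k < n) :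
    LeftDvd (X n k) (block n k * block n (k + 1)) := by
  induction k with
  | zero => exact ⟨1, by simp [block]⟩
  | succ k ih =>
    obtain ⟨c, hc⟩ := ih (by omega)
    refine ⟨X n k * (X n (k + 1) * c), ?_⟩
    change X n k * block n k * (X n (k + 1) * block n (k + 1)) = _
    rw [mul_assoc, ← mul_assoc (block n k), ← (X_block_comm le_rfl).eq, mul_assoc, hc,
      X_braid hk]

theorem X_dvd_garside {n i k : ℕ} (hik : i < k) (hk : k ≤ n) : LeftDvd (X n i) (garside n k) := by
  induction k with
  | zero => omega
  | succ k ih =>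
    rcases Nat.lt_succ_iff_lt_or_eq.1 hik with h | rfl
    · obtain ⟨c, hc⟩ := ih h (by omega)
      exact ⟨c * block n (k + 1), by rw [garside, hc, mul_assoc]⟩
    · cases i with
      | zero => exact ⟨1, by simp [garside, block]⟩
      | succ m =>
        obtain ⟨c, hc⟩ := X_dvd_block_mul (n := n) (k := m + 1) (by omega)
        refine ⟨garside n m * c, ?_⟩
        rw [garside, garside, mul_assoc, hc, ← mul_assoc, ← mul_assoc,
          (X_garside_comm le_rfl).eq]

/-- Together with `X_dvd_block_mul` this says that the lcm of `x_k` and the block `x_{k-1} ⋯ x_0`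
is `(x_{k-1} ⋯ x_0)(x_k ⋯ x_0)`. -/
theorem block_dvd {n k : ℕ} (hk : k < n) {v : M n} (h : LeftDvd (X n k) (block n k * v)) :
    LeftDvd (block n (k + 1)) v := by
  induction k generalizing v with
  | zero => simpa [block] using h
  | succ k ih =>
    obtain ⟨c, hc⟩ := h
    rw [block, mul_assoc] at hc
    obtain ⟨d, hd⟩ := X_adj hk hc
    obtain ⟨v', rfl⟩ := X_dvd_of_block le_rfl hk ⟨_, hd⟩
    rw [← mul_assoc, ← (X_block_comm le_rfl).eq, mul_assoc] at hd
    obtain ⟨r, rfl⟩ := ih (by omega) ⟨d, X_cancel hd⟩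
    exact ⟨r, by rw [block.eq_2 n (k + 1), mul_assoc]⟩

theorem garside_dvd {n k : ℕ} (hk : k ≤ n) {w : M n} (h : ∀ i < k, LeftDvd (X n i) w) :
    LeftDvd (garside n k) w := by
  induction k with
  | zero => exact ⟨w, by simp [garside]⟩
  | succ k ih =>
    obtain ⟨v, rfl⟩ := ih (by omega) fun i hi => h i (by omega)
    have hX := h k (by omega)
    have hv : LeftDvd (X n k) (block n k * v) := by
      cases k with
      | zero => simpa [garside, block] using hX
      | succ m =>
        rw [garside, mul_assoc] at hX
        exact X_dvd_of_garside le_rfl hk hX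
    obtain ⟨r, rfl⟩ := block_dvd hk hv
    exact ⟨r, by rw [garside, mul_assoc]⟩

/-- **Corollary 1**: in the Artin monoid of type `Aₙ`, the element
`Δ = x₁(x₂x₁)(x₃x₂x₁)⋯(xₙx_{n−1}⋯x₁)` is the least common left multiple of the
generators `x₁,…,xₙ`. -/
theorem statement6 (n : ℕ) (hn : 1 ≤ n) :
    IsLeftLcm (Set.range (x (n := n))) (delta n) := by
  rw [delta_eq]
  refine ⟨?_, fun w hw => garside_dvd le_rfl fun i hi => ?_⟩
  · rintro _ ⟨i, rfl⟩
    simpa only [X_of_lt i.isLt] using X_dvd_garside i.isLt le_rfl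
  · rw [X_of_lt hi]
    exact hw _ ⟨_, rfl⟩

end ArtinA
end

section
/- In the Artin monoid of type B_n (n ≥ 2), the element Δ = x_1(x_2x_1x_2)(x_3x_2x_1x_2x_3)⋯(x_nx_{n−1}⋯x_2x_1x_2⋯x_{n−1}x_n), i.e., the product over k = 1,…,n of the blocks x_kx_{k−1}⋯x_2x_1x_2⋯x_{k−1}x_k, is the least common left multiple of the generators {x_1,…,x_n}. -/
/-!
The proof rests on Garside's reduction property (`red_all`): if `x i * a = x j * b`, then `a` and
`b` are the complements of `x i` and `x j` in their lcm (read off from the defining relation)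
times a common right factor; for `i = j` this is left cancellation. It is proved by induction on
length. For words of a given length the property is shown by induction on the generation of the
congruence (`word_red`), where only transitivity is not formal: if the intermediate word starts
with `x k`, one needs the cube condition for `(i, j, k)`, which concerns an equation between
shorter elements. This is a finite verification (`cube`) on the diagrams with at most three nodes,
the connected ones with three nodes being `A₃` and `B₃`.

Write `D m` for the product of the first `m` blocks and `B k` for `block n k`, so that
`B (k + 1) = x (k + 1) * B k * x (k + 1)` and `D (m + 1) = D m * B m` (indices start at `0`).

* Consecutive blocks commute (`block_comm`), so
  `D (k + 2) = D k * B k * B (k + 1) = D k * B (k + 1) * B k` is a multiple of `x (k + 1)`, which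
  commutes with `D k`. Hence every `x i` with `i < m` left-divides `D m`.
* If `B k * u` is a right multiple of `x (k + 1)`, then `u` is a right multiple of `B (k + 1)`
  (`block_red`, by induction on `k` with the reduction property). Since `x (k + 1)` commutes with
  all generators in `D k`, a common right multiple of `D (k + 1) = D k * B k` and `x (k + 1)` is a
  right multiple of `D (k + 2)`. By induction `D m` left-divides every common right multiple of
  the first `m` generators.
-/

namespace ArtinB

/-- The relations of type `Bₙ` on `n` generators `x₁,…,xₙ` (indexed by `Fin n`, index `i`
corresponding to `x_{i+1}`): `x₁x₂x₁x₂ = x₂x₁x₂x₁`; `xᵢx_{i+1}xᵢ = x_{i+1}xᵢx_{i+1}` for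
`2 ≤ i ≤ n−1`; `xᵢxⱼ = xⱼxᵢ` for `|i−j| ≥ 2`. -/
def rels (n : ℕ) : FreeMonoid (Fin n) → FreeMonoid (Fin n) → Prop := fun u v =>
  (∃ i j : Fin n, (i : ℕ) = 0 ∧ (j : ℕ) = 1 ∧
    u = .of i * .of j * .of i * .of j ∧ v = .of j * .of i * .of j * .of i) ∨
  (∃ i j : Fin n, 1 ≤ (i : ℕ) ∧ (i : ℕ) + 1 = (j : ℕ) ∧
    u = .of i * .of j * .of i ∧ v = .of j * .of i * .of j) ∨
  (∃ i j : Fin n, (i : ℕ) + 2 ≤ (j : ℕ) ∧ u = .of i * .of j ∧ v = .of j * .of i)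

/-- The Artin monoid of type `Bₙ`. -/
abbrev M (n : ℕ) := PresentedMonoid (rels n)

/-- The generator `x_{i+1}`. -/
def x {n : ℕ} (i : Fin n) : M n := PresentedMonoid.of (rels n) i

/-- The generator `x_{i+1}` as a function of a natural number (`1` out of range). -/
def X (n : ℕ) (i : ℕ) : M n := if h : i < n then x ⟨i, h⟩ else 1

/-- `a` left-divides `b`. -/
def LeftDvd {P : Type*} [Monoid P] (a b : P) : Prop := ∃ c, b = a * c

/-- `a` divides `b` (two-sidedly). -/
def Dvd2 {P : Type*} [Monoid P] (a b : P) : Prop := ∃ l r, b = l * a * r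

/-- `d` is the least common left multiple of the set `S`. -/
def IsLeftLcm {P : Type*} [Monoid P] (S : Set P) (d : P) : Prop :=
  (∀ a ∈ S, LeftDvd a d) ∧ ∀ w, (∀ a ∈ S, LeftDvd a w) → LeftDvd d w

/-- The block `x_{k+1}x_k⋯x₂x₁x₂⋯x_kx_{k+1}`
(with `0`-based indices, `x k * ⋯ * x 1 * x 0 * x 1 * ⋯ * x k`). -/
def block (n k : ℕ) : M n :=
  (((List.range (k + 1)).reverse).map (X n)).prod *
    (((List.range (k + 1)).drop 1).map (X n)).prod

/-- The Garside element `Δ = x₁(x₂x₁x₂)(x₃x₂x₁x₂x₃)⋯(xₙ⋯x₂x₁x₂⋯xₙ)` of type `Bₙ`. -/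
def delta (n : ℕ) : M n := ((List.range n).map (block n)).prod

section Garside

variable {n : ℕ}

/-! ### Relations and length -/

/-- The indices of two commuting distinct generators (bond of order `2`). -/
def Far (i j : Fin n) : Prop := (i : ℕ) + 2 ≤ j ∨ (j : ℕ) + 2 ≤ i

/-- The indices of two generators satisfying the braid relation of length `3`. -/
def Adj3 (i j : Fin n) : Prop :=
  1 ≤ (i : ℕ) ∧ 1 ≤ (j : ℕ) ∧ ((i : ℕ) + 1 = j ∨ (j : ℕ) + 1 = i)

/-- The indices of the two generators satisfying the braid relation of length `4`. -/
def Adj4 (i j : Fin n) : Prop := ((i : ℕ) = 0 ∧ (j : ℕ) = 1) ∨ ((j : ℕ) = 0 ∧ (i : ℕ) = 1)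

lemma Far.symm {i j : Fin n} (h : Far i j) : Far j i := Or.symm h

lemma Adj3.symm {i j : Fin n} (h : Adj3 i j) : Adj3 j i := ⟨h.2.1, h.1, h.2.2.symm⟩

lemma Adj4.symm {i j : Fin n} (h : Adj4 i j) : Adj4 j i := Or.symm h

lemma mk_eq_of_rels {u v : FreeMonoid (Fin n)} (h : rels n u v) :
    PresentedMonoid.mk (rels n) u = PresentedMonoid.mk (rels n) v :=
  Quotient.sound (ConGen.Rel.of _ _ h)

lemma rel2 {i j : Fin n} (h : Far i j) (t : M n) : x i * (x j * t) = x j * (x i * t) := by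
  have key : ∀ i j : Fin n, (i : ℕ) + 2 ≤ j → x i * x j = x j * x i := fun i j h => by
    simpa [x, PresentedMonoid.of] using mk_eq_of_rels (Or.inr (Or.inr ⟨i, j, h, rfl, rfl⟩))
  rcases h with h | h
  · rw [← mul_assoc, key i j h, mul_assoc]
  · rw [← mul_assoc, ← key j i h, mul_assoc]

lemma rel3 {i j : Fin n} (h : Adj3 i j) (t : M n) :
    x i * (x j * (x i * t)) = x j * (x i * (x j * t)) := by
  have key : ∀ i j : Fin n, 1 ≤ (i : ℕ) → (i : ℕ) + 1 = j →
      x i * x j * x i = x j * x i * x j := fun i j h h1 => by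
    simpa [x, PresentedMonoid.of] using mk_eq_of_rels (Or.inr (Or.inl ⟨i, j, h, h1, rfl, rfl⟩))
  rcases h with ⟨h1, h2, h | h⟩
  · simpa only [mul_assoc] using congrArg (· * t) (key i j h1 h)
  · simpa only [mul_assoc] using congrArg (· * t) (key j i h2 h).symm

lemma rel4 {i j : Fin n} (h : Adj4 i j) (t : M n) :
    x i * (x j * (x i * (x j * t))) = x j * (x i * (x j * (x i * t))) := by
  have key : ∀ i j : Fin n, (i : ℕ) = 0 → (j : ℕ) = 1 →
      x i * x j * x i * x j = x j * x i * x j * x i := fun i j h h1 => by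
    simpa [x, PresentedMonoid.of] using mk_eq_of_rels (Or.inl ⟨i, j, h, h1, rfl, rfl⟩)
  rcases h with ⟨h1, h2⟩ | ⟨h1, h2⟩
  · simpa only [mul_assoc] using congrArg (· * t) (key i j h1 h2)
  · simpa only [mul_assoc] using congrArg (· * t) (key j i h1 h2).symm

/-- The length homomorphism, written multiplicatively; it exists because the relations are
homogeneous. -/
def lenHom (n : ℕ) : M n →* Multiplicative ℕ :=
  PresentedMonoid.lift (fun _ => Multiplicative.ofAdd 1) (by
    rintro u v (⟨i, j, -, -, rfl, rfl⟩ | ⟨i, j, -, -, rfl, rfl⟩ | ⟨i, j, -, rfl, rfl⟩) <;> simp)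

/-- The length of an element: the common length of all words representing it. -/
def len (a : M n) : ℕ := (lenHom n a).toAdd

lemma len_mul (a b : M n) : len (a * b) = len a + len b := by simp [len]

lemma len_x (i : Fin n) : len (x i) = 1 := by
  simp [len, lenHom, x, PresentedMonoid.lift_of]

/-! ### Complements and the reduction property -/

open Classical in
/-- The complement of `x i` in the right lcm of `x i` and `x j`:
`x i * comp i j = x j * comp j i` is that lcm. -/
noncomputable def comp (i j : Fin n) : M n :=
  if i = j then 1 else if Far i j then x j else if Adj4 i j then x j * (x i * x j)
  else x j * x i

lemma comp_self (i : Fin n) : comp i i = 1 := by simp [comp]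

lemma comp_far {i j : Fin n} (h : Far i j) (t : M n) : comp i j * t = x j * t := by
  have : i ≠ j := by rintro rfl; rcases h with h | h <;> omega
  simp [comp, h, this]

lemma comp_adj3 {i j : Fin n} (h : Adj3 i j) (t : M n) :
    comp i j * t = x j * (x i * t) := by
  obtain ⟨h1, h2, h3⟩ := h
  have : i ≠ j := by rintro rfl; omega
  have h4 : ¬ Far i j := by unfold Far; omega
  have h5 : ¬ Adj4 i j := by unfold Adj4; omega
  simp [comp, h4, h5, this, mul_assoc]

lemma comp_adj4 {i j : Fin n} (h : Adj4 i j) (t : M n) :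
    comp i j * t = x j * (x i * (x j * t)) := by
  have : i ≠ j := by rintro rfl; rcases h with h | h <;> omega
  have h4 : ¬ Far i j := by unfold Far; unfold Adj4 at h; omega
  simp [comp, h, h4, this, mul_assoc]

lemma index_cases (i j : Fin n) : i = j ∨ Far i j ∨ Adj3 i j ∨ Adj4 i j := by
  rw [Fin.ext_iff]; unfold Far Adj3 Adj4; omega

/-- The reduction property for elements of length at most `l`: a common right multiple of `x i` and
`x j` is a multiple of their lcm, with left cancellation of generators as the case `i = j`. -/
def Red (n l : ℕ) : Prop := ∀ (i j : Fin n) (a b : M n), len a < l → x i * a = x j * b →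
  ∃ c, a = comp i j * c ∧ b = comp j i * c

section Reduction

variable {l : ℕ} {i j k : Fin n} {a b : M n}

lemma Red.one (H : Red n l) (hl : len a < l) (e : x i * a = x i * b) : a = b := by
  obtain ⟨c, rfl, rfl⟩ := H i i a b hl e; rfl

lemma Red.two (H : Red n l) (h : Far i j) (hl : len a < l) (e : x i * a = x j * b) :
    ∃ c, a = x j * c ∧ b = x i * c := by
  obtain ⟨c, rfl, rfl⟩ := H i j a b hl e
  exact ⟨c, comp_far h c, comp_far h.symm c⟩

lemma Red.three (H : Red n l) (h : Adj3 i j) (hl : len a < l) (e : x i * a = x j * b) :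
    ∃ c, a = x j * (x i * c) ∧ b = x i * (x j * c) := by
  obtain ⟨c, rfl, rfl⟩ := H i j a b hl e
  exact ⟨c, comp_adj3 h c, comp_adj3 h.symm c⟩

lemma Red.four (H : Red n l) (h : Adj4 i j) (hl : len a < l) (e : x i * a = x j * b) :
    ∃ c, a = x j * (x i * (x j * c)) ∧ b = x i * (x j * (x i * c)) := by
  obtain ⟨c, rfl, rfl⟩ := H i j a b hl e
  exact ⟨c, comp_adj4 h c, comp_adj4 h.symm c⟩

/-- The instance of the cube condition at `x k`, for elements of length at most `l + 1`: if the
multiples `x k * comp k i * p` and `x k * comp k j * q` of the lcms of `x k` with `x i` and with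
`x j` agree after removing `x k`, then they are a multiple of the lcm of `x i` and `x j`, with
quotients by `x i` and `x j` as expected. This is what makes the reduction property transitive
along a chain of relations. -/
def Cube (l : ℕ) (i j k : Fin n) : Prop := ∀ p q : M n, len (comp k i * p) ≤ l →
  comp k i * p = comp k j * q → ∃ e, comp i k * p = comp i j * e ∧ comp j k * q = comp j i * e

lemma Cube.symm (h : Cube l i j k) : Cube l j i k := fun p q hl e => by
  obtain ⟨c, h1, h2⟩ := h q p (e ▸ hl) e.symm
  exact ⟨c, h2, h1⟩

/-! ### The cube condition

Up to exchanging `i` and `j`, three distinct generators span a diagram that is either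
disconnected (`cube_left`, `cube_right`), or of type `A₃` or `B₃`. In each case the reductions
available for shorter elements solve the given equation completely, `p` and `q` becoming explicit
multiples of a free parameter; the witness for `e` is then the remaining factor of the lcm of the
three generators, times that parameter. -/

/-- The case where `x k` commutes with both `x i` and `x j`. -/
lemma cube_left (H : Red n l) (h1 : Far k i) (h2 : Far k j) : Cube l i j k := by
  intro p q hl e
  rw [comp_far h1] at hl
  rw [comp_far h1, comp_far h2] at e
  rw [comp_far h1.symm, comp_far h2.symm]
  simp only [len_mul, len_x] at hl
  obtain ⟨c, rfl, rfl⟩ := H i j p q (by omega) e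
  refine ⟨x k * c, ?_, ?_⟩
  all_goals
    rcases index_cases i j with rfl | h | h | h
    · simp [comp_self]
    · simp only [comp_far h, comp_far h.symm, rel2 h1, rel2 h2]
    · simp only [comp_adj3 h, comp_adj3 h.symm, rel2 h1, rel2 h2]
    · simp only [comp_adj4 h, comp_adj4 h.symm, rel2 h1, rel2 h2]

/-- The case where `x j` commutes with both `x k` and `x i`. -/
lemma cube_right (H : Red n l) (h1 : Far k j) (h2 : Far i j) : Cube l i j k := by
  intro p q hl e
  rw [comp_far h1] at e
  rw [comp_far h1.symm]
  have key : ∃ p', p = x j * p' ∧ q = comp k i * p' := by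
    rcases index_cases k i with rfl | h | h | h
    · rw [comp_self, one_mul] at e hl
      exact ⟨q, e, by rw [comp_self, one_mul]⟩
    · rw [comp_far h] at e hl
      simp only [len_mul, len_x] at hl
      obtain ⟨c, rfl, rfl⟩ := H.two h2 (by omega) e
      exact ⟨c, rfl, (comp_far h c).symm⟩
    · rw [comp_adj3 h] at e hl
      simp only [len_mul, len_x] at hl
      obtain ⟨c, e1, rfl⟩ := H.two h2 (by simp only [len_mul, len_x]; omega) e
      obtain ⟨c, rfl, rfl⟩ := H.two h1 (by omega) e1
      exact ⟨c, rfl, (comp_adj3 h c).symm⟩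
    · rw [comp_adj4 h] at e hl
      simp only [len_mul, len_x] at hl
      obtain ⟨c, e1, rfl⟩ := H.two h2 (by simp only [len_mul, len_x]; omega) e
      obtain ⟨c, e2, rfl⟩ := H.two h1 (by simp only [len_mul, len_x]; omega) e1
      obtain ⟨c, rfl, rfl⟩ := H.two h2 (by omega) e2
      exact ⟨c, rfl, (comp_adj4 h c).symm⟩
  obtain ⟨c, rfl, rfl⟩ := key
  refine ⟨comp i k * c, ?_, ?_⟩
  all_goals
    rcases index_cases k i with rfl | h | h | h
    · simp [comp_self, comp_far h2, comp_far h2.symm]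
    · simp only [comp_far h2, comp_far h2.symm, comp_far h, comp_far h.symm, rel2 h1, rel2 h]
    · simp only [comp_far h2, comp_far h2.symm, comp_adj3 h, comp_adj3 h.symm, rel2 h1, rel2 h2,
        rel3 h]
    · simp only [comp_far h2, comp_far h2.symm, comp_adj4 h, comp_adj4 h.symm, rel2 h1, rel2 h2,
        rel4 h]

/-- Type `A₃`, with `x k` the middle generator. -/
lemma cube_A_mid (H : Red n l) (h1 : Adj3 k i) (h2 : Adj3 k j) (h3 : Far i j) :
    Cube l i j k := by
  intro p q hl e
  rw [comp_adj3 h1] at hl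
  rw [comp_adj3 h1, comp_adj3 h2] at e
  simp only [len_mul, len_x] at hl
  have L := congrArg len e
  simp only [len_mul, len_x] at L
  obtain ⟨c, e1, e2⟩ := H.two h3 (by simp only [len_mul, len_x]; omega) e
  obtain ⟨d, rfl, rfl⟩ := H.three h2 (by omega) e1
  obtain ⟨d', rfl, e3⟩ := H.three h1 (by omega) e2
  simp only [len_mul, len_x] at hl
  have e4 := H.one (by simp only [len_mul, len_x]; omega) e3
  obtain ⟨g, rfl, rfl⟩ := H.two h3.symm (by omega) e4
  simp only [comp_adj3 h1.symm, comp_adj3 h2.symm, comp_far h3, comp_far h3.symm]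
  have r1 := rel3 h1
  have r2 := rel3 h2
  have r3 := rel2 h3
  refine ⟨x k * (x j * (x i * (x k * g))), ?_, ?_⟩ <;> grind only

/-- Type `A₃`, with `x k` an end and `x i` the middle generator. -/
lemma cube_A_end (H : Red n l) (h1 : Adj3 k i) (h2 : Far k j) (h3 : Adj3 i j) :
    Cube l i j k := by
  intro p q hl e
  rw [comp_adj3 h1] at hl
  rw [comp_adj3 h1, comp_far h2] at e
  simp only [len_mul, len_x] at hl
  have L := congrArg len e
  simp only [len_mul, len_x] at L
  obtain ⟨c, e1, rfl⟩ := H.three h3 (by simp only [len_mul, len_x]; omega) e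
  simp only [len_mul, len_x] at L
  obtain ⟨p', rfl, e2⟩ := H.two h2 (by omega) e1
  obtain ⟨d, rfl, rfl⟩ := H.three h1.symm (by omega) e2
  simp only [comp_adj3 h1.symm, comp_far h2.symm, comp_adj3 h3, comp_adj3 h3.symm]
  have r1 := rel3 h1
  have r2 := rel2 h2
  have r3 := rel3 h3
  refine ⟨x k * (x i * (x j * d)), ?_, ?_⟩ <;> grind only

/-- Type `B₃`, with `x k` the middle generator. -/
lemma cube_B_mid (H : Red n l) (h1 : Adj4 i k) (h2 : Adj3 k j) (h3 : Far i j) :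
    Cube l i j k := by
  intro p q hl e
  rw [comp_adj4 h1.symm] at hl
  rw [comp_adj4 h1.symm, comp_adj3 h2] at e
  simp only [len_mul, len_x] at hl
  have L := congrArg len e
  simp only [len_mul, len_x] at L
  obtain ⟨u, e1, e2⟩ := H.two h3 (by simp only [len_mul, len_x]; omega) e
  have L1 := congrArg len e2
  simp only [len_mul, len_x] at L1
  obtain ⟨v, e3, rfl⟩ := H.three h2 (by simp only [len_mul, len_x]; omega) e1
  obtain ⟨w, rfl, e4⟩ := H.four h1.symm (by omega) e2
  simp only [len_mul, len_x] at L L1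
  obtain ⟨p', rfl, e5⟩ := H.two h3 (by omega) e3
  obtain ⟨z, rfl, rfl⟩ := H.four h1.symm (by omega) e5
  simp only [len_mul, len_x] at L L1 hl
  have e6 := H.one (by simp only [len_mul, len_x]; omega) e4
  rw [← rel2 h3] at e6
  have e7 := H.one (by simp only [len_mul, len_x]; omega) e6
  obtain ⟨y, e8, rfl⟩ := H.three h2.symm (by simp only [len_mul, len_x]; omega) e7
  have e9 := H.one (by simp only [len_mul, len_x]; omega) e8
  obtain ⟨t, rfl, rfl⟩ := H.two h3 (by omega) e9
  simp only [comp_adj4 h1, comp_adj3 h2.symm, comp_far h3, comp_far h3.symm]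
  have r1 := rel4 h1
  have r2 := rel3 h2
  have r3 := rel2 h3
  generalize x i = a at *
  generalize x k = b at *
  generalize x j = c at *
  refine ⟨b * (c * (a * (b * (a * (c * (b * t)))))), ?_, ?_⟩ <;> clear * - r1 r2 r3 <;> grind only

/-- Type `B₃`, with `x k` the end generator on the side of the bond of order `3`. -/
lemma cube_B_end (H : Red n l) (h1 : Adj3 k i) (h2 : Far k j) (h3 : Adj4 j i) :
    Cube l i j k := by
  intro p q hl e
  rw [comp_adj3 h1] at hl
  rw [comp_adj3 h1, comp_far h2] at e
  simp only [len_mul, len_x] at hl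
  have L := congrArg len e
  simp only [len_mul, len_x] at L
  obtain ⟨u, e1, rfl⟩ := H.four h3.symm (by simp only [len_mul, len_x]; omega) e
  simp only [len_mul, len_x] at L
  obtain ⟨p', rfl, e2⟩ := H.two h2 (by omega) e1
  obtain ⟨v, e3, rfl⟩ := H.three h1.symm (by simp only [len_mul, len_x]; omega) e2
  simp only [len_mul, len_x] at L hl
  obtain ⟨u', rfl, e4⟩ := H.two h2.symm (by omega) e3
  simp only [len_mul, len_x] at L hl
  obtain ⟨w, rfl, rfl⟩ := H.four h3.symm (by omega) e4
  simp only [comp_adj3 h1.symm, comp_far h2.symm, comp_adj4 h3, comp_adj4 h3.symm]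
  have r1 := rel4 h3
  have r2 := rel3 h1
  have r3 := rel2 h2
  generalize x j = a at *
  generalize x i = b at *
  generalize x k = c at *
  refine ⟨c * (b * (a * (b * (c * w)))), ?_, ?_⟩
  · clear * - r1 r2 r3
    grind only
  · calc
      _ = c * (b * (a * (b * (c * (b * (a * (b * w))))))) := rfl
      _ = c * (b * (a * (c * (b * (c * (a * (b * w))))))) := by rw [r2 (a * _)]
      _ = c * (b * (c * (a * (b * (a * (c * (b * w))))))) := by rw [r3, r3]
      _ = b * (c * (b * (a * (b * (a * (c * (b * w))))))) := by rw [r2]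
      _ = b * (c * (a * (b * (a * (b * (c * (b * w))))))) := by rw [r1]
      _ = b * (a * (c * (b * (a * (c * (b * (c * w))))))) := by rw [r3, r2]
      _ = b * (a * (b * (c * (b * (a * (b * (c * w))))))) := by rw [← r3 (b * (c * w)), r2]

/-- Type `B₃`, with `x k` the end generator on the side of the bond of order `4`. -/
lemma cube_B_start (H : Red n l) (h1 : Adj4 k i) (h2 : Far k j) (h3 : Adj3 i j) :
    Cube l i j k := by
  intro p q hl e
  rw [comp_adj4 h1] at hl
  rw [comp_adj4 h1, comp_far h2] at e
  simp only [len_mul, len_x] at hl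
  have L := congrArg len e
  simp only [len_mul, len_x] at L
  obtain ⟨u, e1, rfl⟩ := H.three h3 (by simp only [len_mul, len_x]; omega) e
  simp only [len_mul, len_x] at L
  obtain ⟨v, e2, e3⟩ := H.two h2 (by simp only [len_mul, len_x]; omega) e1
  have L1 := congrArg len e3
  simp only [len_mul, len_x] at L1
  obtain ⟨s, rfl, rfl⟩ := H.three h3 (by omega) e2
  obtain ⟨t, rfl, e4⟩ := H.four h1.symm (by omega) e3
  simp only [len_mul, len_x] at L L1 hl
  have e5 := H.one (by simp only [len_mul, len_x]; omega) e4
  obtain ⟨s', rfl, e6⟩ := H.two h2.symm (by omega) e5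
  simp only [len_mul, len_x] at L L1 hl
  obtain ⟨z, rfl, rfl⟩ := H.three h3 (by omega) e6
  simp only [comp_adj4 h1.symm, comp_far h2.symm, comp_adj3 h3, comp_adj3 h3.symm]
  have r1 := rel4 h1
  have r2 := rel3 h3
  have r3 := rel2 h2
  generalize x k = a at *
  generalize x i = b at *
  generalize x j = c at *
  refine ⟨a * (b * (a * (c * (b * (a * z))))), ?_, ?_⟩ <;> clear * - r1 r2 r3 <;> grind only

end Reduction

lemma comp_cancel {l : ℕ} (H : Red n l) (k i : Fin n) {p q : M n}
    (hl : len (comp k i * p) ≤ l) (e : comp k i * p = comp k i * q) : p = q := by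
  rcases index_cases k i with rfl | h | h | h
  · simpa [comp_self] using e
  · rw [comp_far h] at hl
    rw [comp_far h, comp_far h] at e
    simp only [len_mul, len_x] at hl
    exact H.one (by omega) e
  · rw [comp_adj3 h] at hl
    rw [comp_adj3 h, comp_adj3 h] at e
    simp only [len_mul, len_x] at hl
    exact H.one (by omega) (H.one (by simp only [len_mul, len_x]; omega) e)
  · rw [comp_adj4 h] at hl
    rw [comp_adj4 h, comp_adj4 h] at e
    simp only [len_mul, len_x] at hl
    exact H.one (by omega) (H.one (by simp only [len_mul, len_x]; omega)
      (H.one (by simp only [len_mul, len_x]; omega) e))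

/-- The reduction property in lengths at most `l` implies every instance of the cube condition in
which the two equal elements `comp k i * p` and `comp k j * q` have length at most `l`. -/
lemma cube {l : ℕ} (H : Red n l) (i j k : Fin n) : Cube l i j k := by
  by_cases hij : i = j
  · subst hij
    intro p q hl e
    obtain rfl := comp_cancel H k i hl e
    exact ⟨comp i k * p, by simp [comp_self]⟩
  by_cases hik : i = k
  · subst hik
    intro p q hl e
    rw [comp_self, one_mul] at e
    exact ⟨q, by rw [comp_self, one_mul, e], rfl⟩
  by_cases hjk : j = k
  · subst hjk
    intro p q hl e
    rw [comp_self, one_mul] at e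
    exact ⟨p, rfl, by rw [comp_self, one_mul, e]⟩
  by_cases hki : Far k i
  · by_cases hkj : Far k j
    · exact cube_left H hki hkj
    by_cases h : Far i j
    · exact (cube_right H hki h.symm).symm
    refine Cube.symm ?_
    rcases index_cases k j with h1 | h1 | h1 | h1
    · exact absurd h1.symm hjk
    · exact absurd h1 hkj
    · rcases index_cases j i with h2 | h2 | h2 | h2
      · exact absurd h2.symm hij
      · exact absurd h2.symm h
      · exact cube_A_end H h1 hki h2
      · exact cube_B_end H h1 hki h2.symm
    · refine cube_B_start H h1 hki ?_
      unfold Adj4 Far Adj3 at *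
      omega
  by_cases hkj : Far k j
  · by_cases h : Far i j
    · exact cube_right H hkj h
    rcases index_cases k i with h1 | h1 | h1 | h1
    · exact absurd h1.symm hik
    · exact absurd h1 hki
    · rcases index_cases i j with h2 | h2 | h2 | h2
      · exact absurd h2 hij
      · exact absurd h2 h
      · exact cube_A_end H h1 hkj h2
      · exact cube_B_end H h1 hkj h2.symm
    · refine cube_B_start H h1 hkj ?_
      unfold Adj4 Far Adj3 at *
      omega
  -- Now `k` is adjacent to both `i` and `j`, so it lies strictly between them.
  rw [Fin.ext_iff] at hij hik hjk
  have h3 : Far i j := by unfold Far at *; omega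
  by_cases hi : (i : ℕ) = 0
  · refine cube_B_mid H ?_ ?_ h3 <;> simp only [Adj4, Far, Adj3] at * <;> omega
  by_cases hj : (j : ℕ) = 0
  · refine Cube.symm (cube_B_mid H ?_ ?_ h3.symm) <;> simp only [Adj4, Far, Adj3] at * <;> omega
  · refine cube_A_mid H ?_ ?_ h3 <;> unfold Far Adj3 at * <;> omega

/-! ### Reduction for words -/

lemma len_mk (u : FreeMonoid (Fin n)) : len (PresentedMonoid.mk (rels n) u) = u.length := by
  induction u using FreeMonoid.inductionOn' with
  | one => simp [len]
  | of_mul i u ih =>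
    rw [map_mul, len_mul, ih, FreeMonoid.length_mul, FreeMonoid.length_of]
    exact congrArg (· + _) (len_x i)

lemma mk_eq_of_rel {u v : FreeMonoid (Fin n)} (h : ConGen.Rel (rels n) u v) :
    PresentedMonoid.mk (rels n) u = PresentedMonoid.mk (rels n) v := Quotient.sound h

lemma length_eq_of_rel {u v : FreeMonoid (Fin n)} (h : ConGen.Rel (rels n) u v) :
    u.length = v.length := by
  rw [← len_mk, ← len_mk, mk_eq_of_rel h]

lemma of_mul_inj {i j : Fin n} {a b : FreeMonoid (Fin n)}
    (h : FreeMonoid.of i * a = FreeMonoid.of j * b) : i = j ∧ a = b := by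
  have := congrArg FreeMonoid.toList h
  simpa using this

/-- The conclusion of the reduction property for two words. Unlike the property of elements, it
can be proved by induction on the generation of the congruence. -/
lemma word_red {l : ℕ} (H : Red n l) {u v : FreeMonoid (Fin n)} (h : ConGen.Rel (rels n) u v) :
    u.length ≤ l + 1 → ∀ i j a b, u = .of i * a → v = .of j * b →
      ∃ c, PresentedMonoid.mk (rels n) a = comp i j * c ∧
        PresentedMonoid.mk (rels n) b = comp j i * c := by
  induction h with
  | of u v h =>
    rintro - i j a b hu hv
    refine ⟨1, ?_⟩
    rcases h with ⟨i', j', h1, h2, rfl, rfl⟩ | ⟨i', j', h1, h2, rfl, rfl⟩ | ⟨i', j', h, rfl, rfl⟩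
    · simp only [mul_assoc] at hu hv
      obtain ⟨rfl, rfl⟩ := of_mul_inj hu
      obtain ⟨rfl, rfl⟩ := of_mul_inj hv
      have h : Adj4 i' j' := Or.inl ⟨h1, h2⟩
      rw [comp_adj4 h, comp_adj4 h.symm]
      simp [x, PresentedMonoid.of]
    · simp only [mul_assoc] at hu hv
      obtain ⟨rfl, rfl⟩ := of_mul_inj hu
      obtain ⟨rfl, rfl⟩ := of_mul_inj hv
      have h : Adj3 i' j' := ⟨h1, by omega, Or.inl h2⟩
      rw [comp_adj3 h, comp_adj3 h.symm]
      simp [x, PresentedMonoid.of]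
    · obtain ⟨rfl, rfl⟩ := of_mul_inj hu
      obtain ⟨rfl, rfl⟩ := of_mul_inj hv
      have h : Far i' j' := Or.inl h
      rw [comp_far h, comp_far h.symm]
      simp [x, PresentedMonoid.of]
  | refl u =>
    rintro - i j a b rfl hv
    obtain ⟨rfl, rfl⟩ := of_mul_inj hv
    exact ⟨_, by rw [comp_self, one_mul], by rw [comp_self, one_mul]⟩
  | symm h ih =>
    intro hl i j a b hu hv
    obtain ⟨c, h1, h2⟩ := ih (by rwa [length_eq_of_rel h]) j i b a hv hu
    exact ⟨c, h2, h1⟩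
  | @trans u w v h1 h2 ih1 ih2 =>
    intro hl i j a b hu hv
    have L := length_eq_of_rel h1
    cases w using FreeMonoid.casesOn with
    | one => simp [hu] at L
    | of_mul k d =>
      obtain ⟨p, hp1, hp2⟩ := ih1 hl i k a d hu rfl
      obtain ⟨q, hq1, hq2⟩ := ih2 (L ▸ hl) k j d b rfl hv
      have hd : len (comp k i * p) ≤ l := by
        rw [← hp2, len_mk]
        rw [L, FreeMonoid.length_mul, FreeMonoid.length_of] at hl
        omega
      rw [hp1, hq2]
      exact cube H i j k p q hd (hp2.symm.trans hq1)
  | @mul u u' v v' h1 h2 ih1 ih2 =>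
    intro hl i j a b hu hv
    have L := length_eq_of_rel h1
    rw [FreeMonoid.length_mul] at hl
    cases u using FreeMonoid.casesOn with
    | one =>
      obtain rfl : u' = 1 := FreeMonoid.length_eq_zero.mp (by simpa using L.symm)
      rw [one_mul] at hu hv
      exact ih2 (by omega) i j a b hu hv
    | of_mul i' a' =>
      cases u' using FreeMonoid.casesOn with
      | one => simp at L
      | of_mul j' b' =>
        rw [mul_assoc] at hu hv
        obtain ⟨rfl, rfl⟩ := of_mul_inj hu
        obtain ⟨rfl, rfl⟩ := of_mul_inj hv
        obtain ⟨c, hc1, hc2⟩ := ih1 (by omega) _ _ _ _ rfl rfl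
        refine ⟨c * PresentedMonoid.mk (rels n) v, ?_, ?_⟩
        · rw [map_mul, hc1, mul_assoc]
        · rw [map_mul, hc2, mul_assoc, mk_eq_of_rel h2]

/-- The reduction property without bound on the length: left cancellation by generators, and any
common right multiple of two generators is a multiple of their lcm. -/
lemma red_all (n l : ℕ) : Red n l := by
  induction l with
  | zero => intro i j a b hl; omega
  | succ l H =>
    intro i j a b hl e
    induction a using PresentedMonoid.inductionOn with | _ a
    induction b using PresentedMonoid.inductionOn with | _ b
    have h : ConGen.Rel (rels n) (.of i * a) (.of j * b) := Quotient.exact e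
    refine word_red H h ?_ i j a b rfl rfl
    rw [len_mk] at hl
    rw [FreeMonoid.length_mul, FreeMonoid.length_of]
    omega

/-! ### Natural-number indices -/

lemma X_eq {i : ℕ} (h : i < n) : X n i = x ⟨i, h⟩ := dif_pos h

lemma X_cancel {i : ℕ} (hi : i < n) {a b : M n} (e : X n i * a = X n i * b) : a = b := by
  rw [X_eq hi] at e
  exact (red_all n _).one (Nat.lt_succ_self _) e

lemma X_far_comm {i j : ℕ} (h : i + 2 ≤ j) (hj : j < n) (t : M n) :
    X n i * (X n j * t) = X n j * (X n i * t) := by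
  rw [X_eq hj, X_eq (show i < n by omega)]
  exact rel2 (Or.inl h) t

lemma X_braid {i : ℕ} (hi : 1 ≤ i) (h : i + 1 < n) (t : M n) :
    X n i * (X n (i + 1) * (X n i * t)) = X n (i + 1) * (X n i * (X n (i + 1) * t)) := by
  rw [X_eq h, X_eq (show i < n by omega)]
  exact rel3 ⟨hi, by simp, Or.inl rfl⟩ t

lemma X_braid4 (h : 1 < n) (t : M n) :
    X n 0 * (X n 1 * (X n 0 * (X n 1 * t))) = X n 1 * (X n 0 * (X n 1 * (X n 0 * t))) := by
  rw [X_eq h, X_eq (show 0 < n by omega)]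
  exact rel4 (Or.inl ⟨rfl, rfl⟩) t

lemma X_red3 {i : ℕ} (hi : 1 ≤ i) (h : i + 1 < n) {a b : M n}
    (e : X n i * a = X n (i + 1) * b) :
    ∃ c, a = X n (i + 1) * (X n i * c) ∧ b = X n i * (X n (i + 1) * c) := by
  rw [X_eq h, X_eq (show i < n by omega)] at *
  exact (red_all n _).three ⟨hi, by simp, Or.inl rfl⟩ (Nat.lt_succ_self _) e

lemma X_red4 (h : 1 < n) {a b : M n} (e : X n 0 * a = X n 1 * b) :
    ∃ c, a = X n 1 * (X n 0 * (X n 1 * c)) := by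
  rw [X_eq h, X_eq (show 0 < n by omega)] at *
  obtain ⟨c, rfl, -⟩ := (red_all n _).four (Or.inl ⟨rfl, rfl⟩) (Nat.lt_succ_self _) e
  exact ⟨c, rfl⟩

/-! ### Blocks and their partial products -/

/-- The product of the first `m` blocks, so that `delta n = partialDelta n n`. -/
def partialDelta (n m : ℕ) : M n := ((List.range m).map (block n)).prod

lemma partialDelta_succ (m : ℕ) : partialDelta n (m + 1) = partialDelta n m * block n m := by
  simp [partialDelta, List.range_succ]

lemma block_zero : block n 0 = X n 0 := by simp [block]

lemma block_succ (k : ℕ) : block n (k + 1) = X n (k + 1) * (block n k * X n (k + 1)) := by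
  have h : (List.range (k + 1 + 1)).drop 1 = (List.range (k + 1)).drop 1 ++ [k + 1] := by
    rw [List.range_succ, List.drop_append_of_le_length (by simp)]
  rw [block, h, List.range_succ]
  simp [block, mul_assoc]

/-- `m` commutes with `t` and has only the trivial common multiples with it: any common right
multiple of `m` and `t` is a multiple of `m * t = t * m`. -/
def Indep (m t : M n) : Prop :=
  (∀ p, m * (t * p) = t * (m * p)) ∧ ∀ p q, m * p = t * q → ∃ c, p = t * c ∧ q = m * c

lemma Indep.mul {m m' t : M n} (h : Indep m t) (h' : Indep m' t) : Indep (m * m') t := by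
  refine ⟨fun p => by rw [mul_assoc, h'.1, h.1, mul_assoc], fun p q e => ?_⟩
  rw [mul_assoc] at e
  obtain ⟨c, e1, rfl⟩ := h.2 _ _ e
  obtain ⟨d, rfl, rfl⟩ := h'.2 _ _ e1
  exact ⟨d, rfl, (mul_assoc _ _ _).symm⟩

lemma indep_X {i j : ℕ} (h : i + 2 ≤ j) (hj : j < n) : Indep (X n i) (X n j) := by
  refine ⟨X_far_comm h hj, fun p q e => ?_⟩
  rw [X_eq hj, X_eq (show i < n by omega)] at *
  exact (red_all n _).two (Or.inl h) (Nat.lt_succ_self _) e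

lemma indep_block {k j : ℕ} (h : k + 2 ≤ j) (hj : j < n) : Indep (block n k) (X n j) := by
  induction k with
  | zero => rw [block_zero]; exact indep_X h hj
  | succ k ih =>
    rw [block_succ]
    exact (indep_X h hj).mul ((ih (by omega)).mul (indep_X h hj))

lemma indep_partialDelta {m j : ℕ} (h : m + 1 ≤ j) (hj : j < n) :
    Indep (partialDelta n m) (X n j) := by
  induction m with
  | zero => exact ⟨by simp [partialDelta], fun p q e => ⟨q, by simpa [partialDelta] using e⟩⟩
  | succ m ih =>
    rw [partialDelta_succ]
    exact (ih (by omega)).mul (indep_block h hj)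

/-- Consecutive blocks commute; the base case is the braid relation of length `4`. -/
lemma block_comm {k : ℕ} (hk : k + 1 < n) (t : M n) :
    block n k * (block n (k + 1) * t) = block n (k + 1) * (block n k * t) := by
  induction k generalizing t with
  | zero => simp only [block_succ, block_zero, mul_assoc]; exact X_braid4 hk t
  | succ k ih =>
    have h1 := X_braid (n := n) (show 1 ≤ k + 1 by omega) hk
    have h2 := (indep_block (n := n) (le_refl (k + 2)) hk).1
    have h3 := fun t => ih (by omega) t
    simp only [block_succ, mul_assoc] at h1 h2 h3 ⊢
    generalize block n k = b at *
    generalize X n (k + 1) = s at *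
    generalize X n (k + 1 + 1) = r at *
    calc
      _ = s * (b * (r * (s * (r * (b * (s * (r * t))))))) := by rw [h1]
      _ = s * (r * (b * (s * (b * (r * (s * (r * t))))))) := by rw [h2, ← h2 (s * (r * t))]
      _ = s * (r * (b * (s * (b * (s * (r * (s * t))))))) := by rw [h1]
      _ = s * (r * (s * (b * (s * (b * (r * (s * t))))))) := by rw [h3]
      _ = r * (s * (r * (b * (s * (r * (b * (s * t))))))) := by rw [h1, h2 (s * t)]
      _ = r * (s * (b * (r * (s * (r * (b * (s * t))))))) := by rw [h2]
      _ = _ := by rw [h1]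

/-- A common multiple of `block n k` and the next generator is a multiple of
`block n k * block n (k + 1)`. -/
lemma block_red {k : ℕ} (hk : k + 1 < n) {u v : M n} (e : block n k * u = X n (k + 1) * v) :
    ∃ w, u = block n (k + 1) * w := by
  induction k generalizing u v with
  | zero =>
    rw [block_zero] at e
    obtain ⟨c, rfl⟩ := X_red4 hk e
    exact ⟨c, by simp only [block_succ, block_zero, mul_assoc]⟩
  | succ k ih =>
    have hI := indep_block (n := n) (le_refl (k + 2)) hk
    rw [block_succ, mul_assoc, mul_assoc] at e
    obtain ⟨c, e1, -⟩ := X_red3 (by omega) hk e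
    obtain ⟨v', e2, e3⟩ := hI.2 _ _ e1
    obtain ⟨c', rfl, rfl⟩ := X_red3 (by omega) hk e2
    obtain ⟨w, e4⟩ := ih (by omega) e3.symm
    rw [block_succ, mul_assoc, mul_assoc] at e4
    obtain ⟨w', e5, rfl⟩ := hI.2 _ _ (X_cancel (by omega) e4).symm
    obtain ⟨d, rfl, rfl⟩ := X_red3 (by omega) hk e5
    exact ⟨d, by simp only [block_succ, mul_assoc]⟩

/-- The last generator divides because the last block commutes with the previous one, and the
generator itself with all earlier blocks. -/
lemma leftDvd_partialDelta {m : ℕ} (hm : m ≤ n) {i : ℕ} (hi : i < m) :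
    LeftDvd (X n i) (partialDelta n m) := by
  induction m with
  | zero => omega
  | succ m ih =>
    rcases Nat.lt_succ_iff_lt_or_eq.mp hi with h | rfl
    · obtain ⟨c, hc⟩ := ih (by omega) h
      exact ⟨c * block n m, by rw [partialDelta_succ, hc, mul_assoc]⟩
    · cases i with
      | zero => exact ⟨1, by simp [partialDelta, block_zero]⟩
      | succ k =>
        have h := block_comm (n := n) hm 1
        rw [mul_one, mul_one, block_succ, mul_assoc] at h
        refine ⟨partialDelta n k * ((block n k * X n (k + 1)) * block n k), ?_⟩
        rw [partialDelta_succ, partialDelta_succ, block_succ, mul_assoc, h,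
          (indep_partialDelta (le_refl (k + 1)) hm).1]

/-- Adding one generator at a time multiplies the lcm by one block, by `block_red`. -/
lemma partialDelta_leftDvd {m : ℕ} (hm : m ≤ n) {w : M n}
    (hw : ∀ i < m, LeftDvd (X n i) w) : LeftDvd (partialDelta n m) w := by
  induction m with
  | zero => exact ⟨w, by simp [partialDelta]⟩
  | succ m ih =>
    obtain ⟨u, hu⟩ := ih (by omega) fun i hi => hw i (by omega)
    obtain ⟨v, hv⟩ := hw m (by omega)
    cases m with
    | zero => exact ⟨v, by simpa [partialDelta, block_zero] using hv⟩
    | succ k =>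
      have e := hu.symm.trans hv
      rw [partialDelta_succ, mul_assoc] at e
      obtain ⟨p, e1, -⟩ := (indep_partialDelta (le_refl (k + 1)) hm).2 _ _ e
      obtain ⟨c, rfl⟩ := block_red hm e1
      exact ⟨c, by rw [partialDelta_succ (k + 1), hu, mul_assoc]⟩

end Garside

/-- **Corollary 2**: in the Artin monoid of type `Bₙ` (`n ≥ 2`), the element
`Δ = x₁(x₂x₁x₂)(x₃x₂x₁x₂x₃)⋯(xₙx_{n−1}⋯x₂x₁x₂⋯x_{n−1}xₙ)` is the least common left
multiple of the generators `x₁,…,xₙ`. -/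
theorem statement8 (n : ℕ) (hn : 2 ≤ n) :
    IsLeftLcm (Set.range (x (n := n))) (delta n) := by
  have hX : ∀ i : Fin n, X n i = x i := fun i => X_eq i.isLt
  refine ⟨?_, fun w hw => partialDelta_leftDvd le_rfl fun i hi => ?_⟩
  · rintro _ ⟨i, rfl⟩
    rw [← hX]
    exact leftDvd_partialDelta le_rfl i.isLt
  · rw [X_eq hi]
    exact hw _ ⟨_, rfl⟩

end ArtinB
end

section
/- In the Artin monoid of type D_n (n ≥ 4), the element Δ = x_1(x_2x_1)(x_3x_2x_1)⋯(x_{n−1}x_{n−2}⋯x_1) · P_n is the least common left multiple of the generators {x_1,…,x_n}, where P_n = ∏_{k=1}^{n−1} (y_k x_{n−2}x_{n−3}⋯x_k) with y_k = x_n for k odd and y_k = x_{n−1} for k even, and where the k-th block y_k x_{n−2}x_{n−3}⋯x_k consists of y_k followed by the descending product x_{n−2}x_{n−3}⋯x_k (this descending part being empty when k > n−2). -/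
/-!
The proof has three ingredients.

*Garside's key lemma* (`key`): in the Artin monoid, a common multiple `x s * a = x t * b` of two
generators is a multiple of their least common multiple, with matching quotients, and generators are left
cancellable. It is proved by induction on length: the property is packaged as a
congruence on words containing the defining relations (`headCon`), so that only transitivity
needs an argument, and this is the cube condition for three generators (`joint_trans`). The
Coxeter graph has no triangles, which keeps the list of cases short.

*The numbers game* (`act`, `Red`): following a linear functional on the simple roots along a word
detects reducedness without constructing the Coxeter group or its root system. A reduced element
whose label at `s` is nonpositive ends in `x s` (`Red.exchange`). Together with the key lemma this
shows that an element divisible by all generators is divisible by every reduced element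
(`Red.dvd`), by passing from `a * x t` to a shorter reduced element that can be extended by both
`x s` and `x t`. A reduced `a` with all final labels nonpositive is right divisible by every
generator; hence its reversal is left divisible by all of them, therefore by `a`, and
comparing lengths, `a` equals its reversal. So `a` is the lcm of the generators
(`Red.isLeftLcm`).

*The word for `delta`*: labellings are described by vectors `h`, on which `x_i` swaps two adjacent
entries and `x_n` swaps and negates the last two. Starting from `(n-1, …, 1, 0)`, the first `n - 1`
descending blocks sort the vector to `(0, 1, …, n-1)`, and the blocks of `P n` then turn it
into `(-(n-1), …, -1, 0)`, always moving at a positive label. All labels of this last vector are `-1`.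
-/

namespace ArtinD

/-- The edges of the Coxeter graph `Dₙ` on `0`-based indices (index `i` corresponds to the
generator `x_{i+1}`): the chain `x₁ − x₂ − ⋯ − x_{n−1}` and the branch `x_{n−2} − xₙ`. -/
def IsEdge (n i j : ℕ) : Prop := (i + 1 = j ∧ j + 2 ≤ n) ∨ (i + 3 = n ∧ j + 1 = n)

/-- The relations of type `Dₙ` (`n ≥ 4`): `xᵢx_{i+1}xᵢ = x_{i+1}xᵢx_{i+1}` for
`1 ≤ i ≤ n−2`; `x_{n−2}xₙx_{n−2} = xₙx_{n−2}xₙ`; `xᵢxⱼ = xⱼxᵢ` for all other pairs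
`i < j` (in particular `x_{n−1}xₙ = xₙx_{n−1}`). -/
def rels (n : ℕ) : FreeMonoid (Fin n) → FreeMonoid (Fin n) → Prop := fun u v =>
  (∃ i j : Fin n, IsEdge n i j ∧
    u = .of i * .of j * .of i ∧ v = .of j * .of i * .of j) ∨
  (∃ i j : Fin n, i < j ∧ ¬ IsEdge n i j ∧ u = .of i * .of j ∧ v = .of j * .of i)

/-- The Artin monoid of type `Dₙ`. -/
abbrev M (n : ℕ) := PresentedMonoid (rels n)

/-- The generator `x_{i+1}`. -/
def x {n : ℕ} (i : Fin n) : M n := PresentedMonoid.of (rels n) i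

/-- The generator `x_{i+1}` as a function of a natural number (`1` out of range). -/
def X (n : ℕ) (i : ℕ) : M n := if h : i < n then x ⟨i, h⟩ else 1

/-- `a` left-divides `b`. -/
def LeftDvd {P : Type*} [Monoid P] (a b : P) : Prop := ∃ c, b = a * c

/-- `a` divides `b` (two-sidedly). -/
def Dvd2 {P : Type*} [Monoid P] (a b : P) : Prop := ∃ l r, b = l * a * r

/-- `d` is the least common left multiple of the set `S`. -/
def IsLeftLcm {P : Type*} [Monoid P] (S : Set P) (d : P) : Prop :=
  (∀ a ∈ S, LeftDvd a d) ∧ ∀ w, (∀ a ∈ S, LeftDvd a w) → LeftDvd d w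

/-- The `k`-th block `y_k x_{n−2}x_{n−3}⋯x_k` of `Pₙ` (here the `1`-based block index `k`
of the paper is the `0`-based `k + 1`): `y_k = xₙ` for `k` odd, `y_k = x_{n−1}` for `k`
even, followed by the descending product `x_{n−2}x_{n−3}⋯x_k` (empty when `k > n−2`). -/
def block (n k : ℕ) : M n :=
  (if k % 2 = 0 then X n (n - 1) else X n (n - 2)) *
    ((((List.range (n - 2)).drop k).reverse).map (X n)).prod

/-- The element `Pₙ = ∏_{k=1}^{n−1} (y_k x_{n−2}x_{n−3}⋯x_k)`. -/
def P (n : ℕ) : M n := ((List.range (n - 1)).map (block n)).prod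

/-- The descending block `x_{k+1}x_k⋯x₁` (with `0`-based indices, `x k * ⋯ * x 0`). -/
def desc (n k : ℕ) : M n := (((List.range (k + 1)).reverse).map (X n)).prod

/-- The Garside element `Δ = x₁(x₂x₁)(x₃x₂x₁)⋯(x_{n−1}x_{n−2}⋯x₁) · Pₙ` of type `Dₙ`. -/
def delta (n : ℕ) : M n := ((List.range (n - 1)).map (desc n)).prod * P n


/-! ### Relations and length -/

/-- Adjacency in the Coxeter graph: the symmetrization of `IsEdge`. -/
def Adj {n : ℕ} (s t : Fin n) : Prop := IsEdge n s t ∨ IsEdge n t s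

lemma Adj.symm {n : ℕ} {s t : Fin n} (h : Adj s t) : Adj t s := Or.symm h

lemma adj_comm {n : ℕ} {s t : Fin n} : Adj s t ↔ Adj t s := or_comm

lemma not_adj_self {n : ℕ} (s : Fin n) : ¬ Adj s s := by
  unfold Adj IsEdge; omega

lemma Adj.ne {n : ℕ} {s t : Fin n} (h : Adj s t) : s ≠ t := by
  rintro rfl; exact not_adj_self _ h

lemma no_triangle {n : ℕ} {r s t : Fin n} (h₁ : Adj r s) (h₂ : Adj r t) : ¬ Adj s t := by
  unfold Adj IsEdge at *; omega

lemma IsEdge.lt {n i j : ℕ} (h : IsEdge n i j) : i < j := by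
  unfold IsEdge at h; omega

lemma braid {n : ℕ} {s t : Fin n} (h : Adj s t) : x s * x t * x s = x t * x s * x t := by
  rcases h with h | h
  · exact PresentedMonoid.mk_eq_mk_of_rel (Or.inl ⟨s, t, h, rfl, rfl⟩)
  · exact (PresentedMonoid.mk_eq_mk_of_rel (Or.inl ⟨t, s, h, rfl, rfl⟩)).symm

lemma comm {n : ℕ} {s t : Fin n} (h : ¬ Adj s t) : x s * x t = x t * x s := by
  unfold Adj at h; push Not at h
  rcases lt_trichotomy s t with h' | rfl | h'
  · exact PresentedMonoid.mk_eq_mk_of_rel (Or.inr ⟨s, t, h', h.1, rfl, rfl⟩)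
  · rfl
  · exact (PresentedMonoid.mk_eq_mk_of_rel (Or.inr ⟨t, s, h', h.2, rfl, rfl⟩)).symm

lemma braid' {n : ℕ} {s t : Fin n} (h : Adj s t) (w : M n) :
    x s * (x t * (x s * w)) = x t * (x s * (x t * w)) := by
  simpa only [mul_assoc] using congrArg (· * w) (braid h)

lemma comm' {n : ℕ} {s t : Fin n} (h : ¬ Adj s t) (w : M n) :
    x s * (x t * w) = x t * (x s * w) := by
  simpa only [mul_assoc] using congrArg (· * w) (comm h)

/-- The word length, which is well defined on the monoid because the relations are homogeneous. -/
def lenHom (n : ℕ) : M n →* Multiplicative ℕ :=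
  PresentedMonoid.lift (fun _ => Multiplicative.ofAdd 1) (by
    rintro a b (⟨i, j, -, rfl, rfl⟩ | ⟨i, j, -, -, rfl, rfl⟩) <;> simp)

/-- The word length as a natural number. -/
def len {n : ℕ} (a : M n) : ℕ := (lenHom n a).toAdd

@[simp] lemma len_one {n : ℕ} : len (1 : M n) = 0 := by simp [len]
@[simp] lemma len_mul {n : ℕ} (a b : M n) : len (a * b) = len a + len b := by simp [len]
@[simp] lemma len_x {n : ℕ} (s : Fin n) : len (x s) = 1 := rfl

lemma eq_one_or {n : ℕ} (a : M n) : a = 1 ∨ ∃ s b, a = x s * b := by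
  induction a using PresentedMonoid.inductionOn with | _ w
  induction w using FreeMonoid.casesOn with
  | one => exact Or.inl rfl
  | of_mul s w => exact Or.inr ⟨s, PresentedMonoid.mk _ w, map_mul _ _ _⟩

lemma eq_one_of_len {n : ℕ} {a : M n} (h : len a = 0) : a = 1 := by
  rcases eq_one_or a with h' | ⟨s, b, rfl⟩
  · exact h'
  · simp at h

/-! ### Garside's key lemma -/

open Classical in
/-- The complement `s ∖ t`: the element with `x s * comp s t = lcm (x s) (x t)`. -/
noncomputable def comp {n : ℕ} (s t : Fin n) : M n :=
  if s = t then 1 else if Adj s t then x t * x s else x t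

lemma comp_self {n : ℕ} (s : Fin n) : comp s s = 1 := by simp [comp]
lemma comp_adj {n : ℕ} {s t : Fin n} (h : Adj s t) : comp s t = x t * x s := by
  simp [comp, h, h.ne]
lemma comp_comm {n : ℕ} {s t : Fin n} (h : s ≠ t) (h' : ¬ Adj s t) : comp s t = x t := by
  simp [comp, h, h']

/-- `Joint s t a b`: the tails of the common multiple `x s * a = x t * b` are obtained from the
two complements by one common right factor. -/
def Joint {n : ℕ} (s t : Fin n) (a b : M n) : Prop :=
  ∃ z, a = comp s t * z ∧ b = comp t s * z

lemma Joint.symm {n : ℕ} {s t : Fin n} {a b : M n} (h : Joint s t a b) : Joint t s b a := by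
  obtain ⟨z, h₁, h₂⟩ := h; exact ⟨z, h₂, h₁⟩

lemma joint_self {n : ℕ} {s : Fin n} {a b : M n} : Joint s s a b ↔ a = b := by
  simp [Joint, comp_self, eq_comm]

lemma joint_adj {n : ℕ} {s t : Fin n} (h : Adj s t) {a b : M n} :
    Joint s t a b ↔ ∃ z, a = x t * (x s * z) ∧ b = x s * (x t * z) := by
  simp [Joint, comp_adj h, comp_adj h.symm, mul_assoc]

lemma joint_comm {n : ℕ} {s t : Fin n} (hne : s ≠ t) (h : ¬ Adj s t) {a b : M n} :
    Joint s t a b ↔ ∃ z, a = x t * z ∧ b = x s * z := by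
  simp [Joint, comp_comm hne h, comp_comm hne.symm (fun h' => h h'.symm)]

/-- The cube condition when exactly one of the two edges `s − r`, `r − t` is present. -/
lemma joint_trans_one {n : ℕ} {k : ℕ}
    (IH : ∀ (s t : Fin n) (a b : M n), len a < k → x s * a = x t * b → Joint s t a b)
    {s r t : Fin n} (hrt : r ≠ t) (asr : Adj s r) (art : ¬ Adj r t) {u y v : M n}
    (hk : len y ≤ k) (h₁ : Joint s r u y) (h₂ : Joint r t y v) : Joint s t u v := by
  obtain ⟨z₁, rfl, hy₁⟩ := (joint_adj asr).1 h₁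
  have l₁ := congrArg len hy₁
  obtain ⟨z₂, hy₂, rfl⟩ := (joint_comm hrt art).1 h₂
  have l₂ := congrArg len hy₂
  simp only [len_mul, len_x] at l₁ l₂
  have hst : s ≠ t := by rintro rfl; exact art asr.symm
  have e := IH s t _ _ (by simp; omega) (hy₁.symm.trans hy₂)
  by_cases ast : Adj s t
  · obtain ⟨p, e₁, rfl⟩ := (joint_adj ast).1 e
    obtain ⟨q, rfl, f⟩ := (joint_comm hrt art).1 (IH r t _ _ (by omega) e₁)
    simp only [len_mul, len_x] at l₁ l₂
    obtain ⟨m, rfl, rfl⟩ := (joint_adj asr).1 (IH s r _ _ (by omega) f)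
    refine (joint_adj ast).2 ⟨x r * (x s * (x t * m)), ?_, ?_⟩
    · rw [braid' ast, ← comm' art m, comm' art (x s * _), braid' asr.symm]
    · rw [← comm' art (x s * m), braid' asr.symm, braid' ast, comm' art]
  · obtain ⟨p, e₁, rfl⟩ := (joint_comm hst ast).1 e
    obtain ⟨q, rfl, rfl⟩ := (joint_comm hrt art).1 (IH r t _ _ (by omega) e₁)
    refine (joint_comm hst ast).2 ⟨x r * (x s * q), ?_, ?_⟩
    · rw [comm' ast, comm' art]
    · rw [braid' asr]

/-- The transitivity step, which is the cube condition for the three generators `s, r, t` when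
the lcm property is already known for shorter elements. -/
lemma joint_trans {n : ℕ} {k : ℕ}
    (IH : ∀ (s t : Fin n) (a b : M n), len a < k → x s * a = x t * b → Joint s t a b)
    {s r t : Fin n} {u y v : M n} (hk : len y ≤ k)
    (h₁ : Joint s r u y) (h₂ : Joint r t y v) : Joint s t u v := by
  by_cases hsr : s = r
  · subst hsr; rw [joint_self] at h₁; rwa [h₁]
  by_cases hrt : r = t
  · subst hrt; rw [joint_self] at h₂; rwa [← h₂]
  by_cases asr : Adj s r <;> by_cases art : Adj r t
  · obtain ⟨z₁, rfl, hy₁⟩ := (joint_adj asr).1 h₁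
    have l₁ := congrArg len hy₁
    obtain ⟨z₂, hy₂, rfl⟩ := (joint_adj art).1 h₂
    have l₂ := congrArg len hy₂
    simp only [len_mul, len_x] at l₁ l₂
    have e := IH s t _ _ (by simp; omega) (hy₁.symm.trans hy₂)
    by_cases hst : s = t
    · subst hst
      rw [joint_self] at e ⊢
      have e' := joint_self.1 (IH r r _ _ (by omega) e)
      rw [e']
    · have ast : ¬ Adj s t := no_triangle asr.symm art
      obtain ⟨p, e₁, e₂⟩ := (joint_comm hst ast).1 e
      obtain ⟨q₁, rfl, f₁⟩ := (joint_adj art).1 (IH r t _ _ (by omega) e₁)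
      obtain ⟨q₂, rfl, f₂⟩ := (joint_adj asr.symm).1 (IH r s _ _ (by omega) e₂)
      simp only [len_mul, len_x] at l₁ l₂
      have g := joint_self.1 (IH r r _ _ (by simp; omega) (f₁.symm.trans f₂))
      obtain ⟨m, rfl, rfl⟩ := (joint_comm (Ne.symm hst) (fun h => ast h.symm)).1
        (IH t s _ _ (by omega) g)
      refine (joint_comm hst ast).2 ⟨x r * (x s * (x t * (x r * m))), ?_, ?_⟩
      · rw [comm' ast, braid' asr, braid' art, comm' ast]
      · rw [← comm' ast (x r * (x t * m)), ← braid' art, braid' asr.symm]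
  · exact joint_trans_one IH hrt asr art hk h₁ h₂
  · refine (joint_trans_one IH (Ne.symm hsr) art.symm (fun h => asr h.symm) hk
      h₂.symm h₁.symm).symm
  · obtain ⟨z₁, rfl, hy₁⟩ := (joint_comm hsr asr).1 h₁
    have l₁ := congrArg len hy₁
    obtain ⟨z₂, hy₂, rfl⟩ := (joint_comm hrt art).1 h₂
    simp only [len_mul, len_x] at l₁
    have e := IH s t _ _ (by omega) (hy₁.symm.trans hy₂)
    by_cases hst : s = t
    · subst hst; rw [joint_self] at e ⊢; rw [e]
    by_cases ast : Adj s t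
    · obtain ⟨q, rfl, rfl⟩ := (joint_adj ast).1 e
      refine (joint_adj ast).2 ⟨x r * q, ?_, ?_⟩
      · rw [comm' art, ← comm' asr]
      · rw [← comm' asr, comm' art]
    · obtain ⟨q, rfl, rfl⟩ := (joint_comm hst ast).1 e
      refine (joint_comm hst ast).2 ⟨x r * q, ?_, ?_⟩
      · rw [comm' art]
      · rw [← comm' asr]

/-- The property of a pair of words that is propagated along derivations: the words are empty, or
their first letters and tails satisfy `Joint`. -/
def HeadJoint {n : ℕ} (w w' : FreeMonoid (Fin n)) : Prop :=
  (w = 1 ∧ w' = 1) ∨ ∃ s t u v, w = .of s * u ∧ w' = .of t * v ∧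
    Joint s t (PresentedMonoid.mk (rels n) u) (PresentedMonoid.mk (rels n) v)

lemma len_mk {n : ℕ} (w : FreeMonoid (Fin n)) :
    len (PresentedMonoid.mk (rels n) w) = w.length := by
  induction w using FreeMonoid.inductionOn' with
  | one => simp
  | of_mul s w ih =>
    rw [map_mul, len_mul, ih, FreeMonoid.length_mul]; rfl

/-- Equality in the monoid, refined by `HeadJoint` for words of length at most `k + 1`. -/
def headCon (n k : ℕ)
    (IH : ∀ (s t : Fin n) (a b : M n), len a < k → x s * a = x t * b → Joint s t a b) :
    Con (FreeMonoid (Fin n)) where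
  r w w' := PresentedMonoid.mk (rels n) w = PresentedMonoid.mk (rels n) w' ∧
    (w.length ≤ k + 1 → HeadJoint w w')
  iseqv :=
    { refl := fun w => ⟨rfl, fun _ => by
        induction w using FreeMonoid.casesOn with
        | one => exact Or.inl ⟨rfl, rfl⟩
        | of_mul s w => exact Or.inr ⟨s, s, w, w, rfl, rfl, joint_self.2 rfl⟩⟩
      symm := fun {w w'} h => ⟨h.1.symm, fun hl => by
        have hlen := congrArg len h.1
        rw [len_mk, len_mk] at hlen
        rcases h.2 (by omega) with ⟨h₁, h₂⟩ | ⟨s, t, u, v, h₁, h₂, h₃⟩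
        · exact Or.inl ⟨h₂, h₁⟩
        · exact Or.inr ⟨t, s, v, u, h₂, h₁, h₃.symm⟩⟩
      trans := fun {w w' w''} h h' => ⟨h.1.trans h'.1, fun hl => by
        have hlen := congrArg len h.1
        rw [len_mk, len_mk] at hlen
        rcases h.2 hl with ⟨h₁, h₂⟩ | ⟨s, r, u, y, h₁, h₂, h₃⟩ <;>
        rcases h'.2 (by omega) with ⟨h₁', h₂'⟩ | ⟨r', t, y', v, h₁', h₂', h₃'⟩
        · exact Or.inl ⟨h₁, h₂'⟩
        · have := congrArg FreeMonoid.length (h₂.symm.trans h₁')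
          simp at this
          omega
        · have := congrArg FreeMonoid.length (h₂.symm.trans h₁')
          simp at this
        · obtain ⟨rfl, rfl⟩ : r = r' ∧ y = y' := List.cons_eq_cons.1 (h₂.symm.trans h₁')
          have hw := congrArg FreeMonoid.length h₂
          rw [FreeMonoid.length_mul, FreeMonoid.length_of] at hw
          exact Or.inr ⟨s, t, u, v, h₁, h₂',
            joint_trans IH (by rw [len_mk]; omega) h₃ h₃'⟩⟩ }
  mul' := fun {a b c d} h h' => ⟨by rw [map_mul, map_mul, h.1, h'.1], fun hl => by
    rw [FreeMonoid.length_mul] at hl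
    rcases h.2 (by omega) with ⟨rfl, rfl⟩ | ⟨s, t, u, v, rfl, rfl, z, h₁, h₂⟩
    · simpa using h'.2 (by omega)
    · exact Or.inr ⟨s, t, u * c, v * d, mul_assoc _ _ _, mul_assoc _ _ _,
        z * PresentedMonoid.mk _ c, by rw [map_mul, h₁, mul_assoc],
        by rw [map_mul, h₂, h'.1, mul_assoc]⟩⟩

/-- Garside's key lemma: a common multiple of `x s` and `x t` is a multiple of their lcm, and the
quotients agree. For `s = t` this is left cancellation of generators. -/
lemma key {n : ℕ} (k : ℕ) : ∀ (s t : Fin n) (a b : M n), len a < k →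
    x s * a = x t * b → Joint s t a b := by
  induction k with
  | zero => intro s t a b h; omega
  | succ k IH =>
    intro s t a b ha h
    obtain ⟨u, rfl⟩ := PresentedMonoid.surjective_mk a
    obtain ⟨v, rfl⟩ := PresentedMonoid.surjective_mk b
    have hle : conGen (rels n) ≤ headCon n k IH := by
      rw [Con.conGen_le]
      intro w w' hw
      refine ⟨PresentedMonoid.mk_eq_mk_of_rel hw, fun _ => Or.inr ?_⟩
      rcases hw with ⟨i, j, hij, rfl, rfl⟩ | ⟨i, j, hlt, hij, rfl, rfl⟩
      · refine ⟨i, j, .of j * .of i, .of i * .of j, mul_assoc _ _ _, mul_assoc _ _ _,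
          (joint_adj (Or.inl hij)).2 ⟨1, ?_, ?_⟩⟩ <;> rw [mul_one] <;> rfl
      · refine ⟨i, j, .of j, .of i, rfl, rfl, (joint_comm hlt.ne ?_).2 ⟨1, ?_, ?_⟩⟩
        · rintro (h' | h')
          · exact hij h'
          · exact absurd h'.lt (by simpa using hlt.le)
        all_goals rw [mul_one]; rfl
    have hw : conGen (rels n) (.of s * u) (.of t * v) := PresentedMonoid.mk_eq_mk_iff.1 h
    rw [len_mk] at ha
    rcases (hle hw).2 (by rw [FreeMonoid.length_mul, FreeMonoid.length_of]; omega) with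
      ⟨h₁, -⟩ | ⟨s', t', u', v', h₁, h₂, h₃⟩
    · have := congrArg FreeMonoid.length h₁
      simp at this
    · obtain ⟨rfl, rfl⟩ := List.cons_eq_cons.1 h₁
      obtain ⟨rfl, rfl⟩ := List.cons_eq_cons.1 h₂
      exact h₃

lemma cancel {n : ℕ} {s : Fin n} {a b : M n} (h : x s * a = x s * b) : a = b :=
  joint_self.1 (key _ s s a b (Nat.lt_succ_self _) h)

/-- If `x s * a` is a multiple of `x t`, then it is a multiple of the lcm; commuting case. -/
lemma tail_comm {n : ℕ} {s t : Fin n} (hne : s ≠ t) (h : ¬ Adj s t) {a : M n}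
    (hd : LeftDvd (x t) (x s * a)) : LeftDvd (x t) a := by
  obtain ⟨b, hb⟩ := hd
  obtain ⟨z, h₁, -⟩ := (joint_comm hne h).1 (key _ s t a b (Nat.lt_succ_self _) hb)
  exact ⟨z, h₁⟩

/-- If `x s * a` is a multiple of `x t`, then it is a multiple of the lcm; braid case. -/
lemma tail_adj {n : ℕ} {s t : Fin n} (h : Adj s t) {a : M n}
    (hd : LeftDvd (x t) (x s * a)) : LeftDvd (x t * x s) a := by
  obtain ⟨b, hb⟩ := hd
  obtain ⟨z, h₁, -⟩ := (joint_adj h).1 (key _ s t a b (Nat.lt_succ_self _) hb)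
  exact ⟨z, by rw [h₁, mul_assoc]⟩

/-! ### Reduced elements and the numbers game -/

open Classical in
/-- A move of the numbers game at the vertex `t`: with `c s = f (a αₛ)` for a linear functional `f`
and a group element `a`, the labelling `act t c` is the one attached to `a sₜ`. -/
noncomputable def act {n : ℕ} (t : Fin n) (c : Fin n → ℤ) : Fin n → ℤ := fun s =>
  if s = t then - c t else if Adj s t then c s + c t else c s

lemma act_self {n : ℕ} (t : Fin n) (c : Fin n → ℤ) : act t c t = - c t := by simp [act]
lemma act_adj {n : ℕ} {s t : Fin n} (h : Adj s t) (c : Fin n → ℤ) :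
    act t c s = c s + c t := by simp [act, h, h.ne]
lemma act_comm {n : ℕ} {s t : Fin n} (hne : s ≠ t) (h : ¬ Adj s t) (c : Fin n → ℤ) :
    act t c s = c s := by simp [act, h, hne]

lemma act_act_comm {n : ℕ} {s t : Fin n} (h : ¬ Adj s t) (c : Fin n → ℤ) :
    act s (act t c) = act t (act s c) := by
  have h' : ¬ Adj t s := fun h' => h h'.symm
  by_cases hst : s = t
  · rw [hst]
  have hts := Ne.symm hst
  funext r
  by_cases h₁ : r = s
  · subst h₁; rw [act_self, act_comm hst h, act_comm hst h, act_self]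
  by_cases h₂ : r = t
  · subst h₂; rw [act_self, act_comm hts h', act_comm hts h', act_self]
  simp only [act, h₁, h₂, hst, hts, h, h', if_false]
  split_ifs <;> ring

lemma act_act_braid {n : ℕ} {s t : Fin n} (h : Adj s t) (c : Fin n → ℤ) :
    act s (act t (act s c)) = act t (act s (act t c)) := by
  have h' := h.symm
  have hst := h.ne
  have hts := hst.symm
  funext r
  by_cases h₁ : r = s
  · subst h₁
    simp only [act, hst, hts, h, h', if_false, if_true]; ring
  by_cases h₂ : r = t
  · subst h₂
    simp only [act, hst, hts, h, h', if_false, if_true]; ring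
  simp only [act, h₁, h₂, hst, hts, h, h', if_false, if_true]
  split_ifs <;> ring

/-- `Red m a c`: some sequence of `m` moves of the numbers game started from the all-ones labelling,
each made at a positive label, spells `a` and ends at `c`. Such `a` are the
positive lifts of the elements of length `m` of the Coxeter group. -/
inductive Red {n : ℕ} : ℕ → M n → (Fin n → ℤ) → Prop
  | one : Red 0 1 (fun _ => 1)
  | step {m a c} (t : Fin n) (h : Red m a c) (hc : 0 < c t) : Red (m + 1) (a * x t) (act t c)

/-- The exchange property: a reduced element with nonpositive label at `s` is right divisible by
`x s`, with reduced quotient. -/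
lemma Red.exchange {n : ℕ} (m : ℕ) : ∀ {a : M n} {c} (s : Fin n), Red m a c → c s ≤ 0 →
    ∃ m' b d, m = m' + 1 ∧ Red m' b d ∧ 0 < d s ∧ a = b * x s ∧ c = act s d := by
  induction m using Nat.strong_induction_on with
  | _ m IH =>
  intro a c s h hs
  cases h with
  | one => simp at hs
  | @step m a c t h hc =>
  by_cases hst : s = t
  · subst hst; exact ⟨m, a, c, rfl, h, hc, rfl, rfl⟩
  by_cases ast : Adj s t
  · rw [act_adj ast] at hs
    obtain ⟨m, b, d, rfl, hb, hd, rfl, rfl⟩ := IH m (by omega) s h (by omega)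
    rw [act_self] at hs
    rw [act_adj ast.symm] at hs hc
    obtain ⟨m, b, d, rfl, hb', hd', rfl, rfl⟩ := IH m (by omega) t hb (by omega)
    rw [act_self] at hs hc
    rw [act_adj ast] at hs hc hd
    refine ⟨m + 1 + 1, b * x s * x t, act t (act s d), rfl,
      .step t (.step s hb' (by omega)) ?_, ?_, ?_, (act_act_braid ast d).symm⟩
    · rw [act_adj ast.symm]; omega
    · rw [act_adj ast, act_self, act_adj ast.symm]; omega
    · simp only [mul_assoc]
      simpa only [mul_assoc] using congrArg (b * ·) (braid ast.symm)
  · have hts : ¬ Adj t s := fun h => ast h.symm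
    rw [act_comm hst ast] at hs
    obtain ⟨m, b, d, rfl, hb, hd, rfl, rfl⟩ := IH m (by omega) s h hs
    rw [act_comm (Ne.symm hst) hts] at hc
    refine ⟨m + 1, b * x t, act t d, rfl, .step t hb hc, ?_, ?_, (act_act_comm hts d)⟩
    · rwa [act_comm hst ast]
    · rw [mul_assoc, mul_assoc, comm ast]

/-- If every generator divides `w = a * v` and `a * x s` is reduced, then `x s` divides `v`. -/
lemma Red.extend {n : ℕ} {w : M n} (hw : ∀ s : Fin n, LeftDvd (x s) w) (m : ℕ) :
    ∀ {a : M n} {c} (s : Fin n), Red m a c → 0 < c s →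
      ∀ v, w = a * v → LeftDvd (x s) v := by
  induction m using Nat.strong_induction_on with
  | _ m IH =>
  intro a c s h hs v hv
  cases h with
  | one => rw [one_mul] at hv; exact hv ▸ hw s
  | @step m a c t h hc =>
  rw [mul_assoc] at hv
  by_cases hst : s = t
  · subst hst; rw [act_self] at hs; omega
  by_cases ast : Adj s t
  · rw [act_adj ast] at hs
    by_cases hcs : 0 < c s
    · obtain ⟨z, hz⟩ := tail_adj ast.symm (IH m (by omega) s h hcs _ hv)
      exact ⟨x t * z, by rw [hz, mul_assoc]⟩
    · obtain ⟨m, b, d, rfl, hb, hd, rfl, rfl⟩ := Red.exchange m s h (by omega)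
      rw [act_self, act_adj ast.symm] at hs
      rw [mul_assoc] at hv
      -- Both `x s` and `x t` divide the remaining factor, hence so does their lcm.
      obtain ⟨z, hz⟩ := tail_adj ast (IH m (by omega) t hb (by omega) _ hv)
      rw [mul_assoc] at hz
      exact ⟨z, cancel hz⟩
  · rw [act_comm hst ast] at hs
    exact tail_comm (Ne.symm hst) (fun h => ast h.symm) (IH m (by omega) s h hs _ hv)

/-- A common multiple of the generators is a multiple of every reduced element. -/
lemma Red.dvd {n : ℕ} {w : M n} (hw : ∀ s : Fin n, LeftDvd (x s) w) {m : ℕ} {a : M n} {c}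
    (h : Red m a c) : LeftDvd a w := by
  induction h with
  | one => exact ⟨w, (one_mul w).symm⟩
  | step t h hc ih =>
    obtain ⟨v, hv⟩ := ih
    obtain ⟨z, rfl⟩ := Red.extend hw _ t h hc v hv
    exact ⟨z, by rw [hv, mul_assoc]⟩

/-! ### Reversal and the lcm of the generators -/

/-- The anti-automorphism reversing words. -/
def revHom (n : ℕ) : M n →* (M n)ᵐᵒᵖ :=
  PresentedMonoid.lift (fun i => MulOpposite.op (x i)) (by
    rintro a b (⟨i, j, h, rfl, rfl⟩ | ⟨i, j, hl, h, rfl, rfl⟩)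
    · simp only [map_mul, FreeMonoid.lift_eval_of, ← MulOpposite.op_mul, ← mul_assoc]
      rw [braid (Or.inl h)]
    · simp only [map_mul, FreeMonoid.lift_eval_of, ← MulOpposite.op_mul]
      rw [comm]
      rintro (h' | h')
      · exact absurd h'.lt (by simpa using hl.le)
      · exact h h')

/-- The reversal of an element, as an element of the same monoid. -/
def rev {n : ℕ} (a : M n) : M n := (revHom n a).unop

@[simp] lemma rev_x {n : ℕ} (s : Fin n) : rev (x s) = x s := rfl
@[simp] lemma rev_mul {n : ℕ} (a b : M n) : rev (a * b) = rev b * rev a := by simp [rev]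

lemma len_rev {n : ℕ} (a : M n) : len (rev a) = len a := by
  induction h : len a generalizing a with
  | zero => rw [eq_one_of_len h]; simp [rev]
  | succ k ih =>
    rcases eq_one_or a with rfl | ⟨s, b, rfl⟩
    · simp at h
    · simp only [len_mul, len_x] at h
      rw [rev_mul, len_mul, ih b (by omega)]; simp

/-- A reduced element at which the game is over is the lcm of the generators. -/
lemma Red.isLeftLcm {n m : ℕ} {a : M n} {c} (h : Red m a c) (hc : ∀ s, c s ≤ 0) :
    IsLeftLcm (Set.range (x (n := n))) a := by
  have hr : ∀ s : Fin n, LeftDvd (x s) (rev a) := fun s => by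
    obtain ⟨_, b, _, _, _, _, rfl, _⟩ := Red.exchange m s h (hc s)
    exact ⟨rev b, by simp⟩
  -- `a` divides its own reversal, which has the same length, so `a` is a palindrome.
  obtain ⟨z, hz⟩ := h.dvd hr
  have hl := congrArg len hz
  rw [len_rev, len_mul] at hl
  rw [eq_one_of_len (show len z = 0 by omega), mul_one] at hz
  refine ⟨?_, fun w hw => h.dvd fun s => hw _ ⟨s, rfl⟩⟩
  rintro _ ⟨s, rfl⟩
  exact hz ▸ hr s


/-! ### Playing the game along `delta` -/

/-- The labelling of the numbers game attached to a vector `h`: the pairings of `h` with the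
simple roots `eᵢ - e_{i+1}` and `e_{n-1} + e_n` of type `Dₙ`. -/
def label (n : ℕ) (h : ℕ → ℤ) : Fin n → ℤ := fun i =>
  if (i : ℕ) + 1 = n then h (n - 2) + h (n - 1) else h i - h (i + 1)

lemma label_congr {n : ℕ} (hn : 4 ≤ n) {h h' : ℕ → ℤ} (e : ∀ i < n, h i = h' i) :
    label n h = label n h' := by
  funext i
  unfold label
  split_ifs with hi
  · rw [e _ (by omega), e _ (by omega)]
  · rw [e _ (by omega), e _ (by omega)]

/-- `Steps n a h h'`: a sequence of moves at positive labels, leading from the labelling of `h`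
to that of `h'`, spells `a`. It is phrased as extending any reduced element that ends at the labelling
of `h`. -/
def Steps (n : ℕ) (a : M n) (h h' : ℕ → ℤ) : Prop :=
  ∀ m b, Red m b (label n h) → ∃ m', Red m' (b * a) (label n h')

lemma Steps.mul {n : ℕ} {a b : M n} {h h' h'' : ℕ → ℤ} (H : Steps n a h h')
    (H' : Steps n b h' h'') : Steps n (a * b) h h'' := by
  intro m c hc
  obtain ⟨m', hm'⟩ := H m c hc
  rw [← mul_assoc]
  exact H' m' _ hm'

lemma Steps.one {n : ℕ} (hn : 4 ≤ n) {h h' : ℕ → ℤ} (e : ∀ i < n, h i = h' i) :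
    Steps n 1 h h' := by
  intro m b hb
  rw [mul_one, ← label_congr hn e]
  exact ⟨m, hb⟩

lemma Steps.swap {n : ℕ} (hn : 4 ≤ n) {h h' : ℕ → ℤ} {i : ℕ} (hi : i + 1 < n)
    (hlt : h (i + 1) < h i)
    (e₁ : h' i = h (i + 1)) (e₂ : h' (i + 1) = h i)
    (e₃ : ∀ j < n, j ≠ i → j ≠ i + 1 → h' j = h j) : Steps n (X n i) h h' := by
  intro m b hb
  have hX : X n i = x ⟨i, by omega⟩ := dif_pos (by omega)
  have hl : act ⟨i, by omega⟩ (label n h) = label n h' := by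
    funext ⟨j, hj⟩
    simp only [act, label, Adj, IsEdge, Fin.mk.injEq]
    have := e₃ j hj
    have := e₃ (j + 1)
    have := e₃ (n - 1)
    have := e₃ (n - 2)
    grind
  rw [hX, ← hl]
  refine ⟨m + 1, .step _ hb ?_⟩
  simp only [label]
  rw [if_neg (by omega)]; omega

lemma Steps.last {n : ℕ} (hn : 4 ≤ n) {h h' : ℕ → ℤ} (hlt : 0 < h (n - 2) + h (n - 1))
    (e₁ : h' (n - 2) = - h (n - 1)) (e₂ : h' (n - 1) = - h (n - 2))
    (e₃ : ∀ j < n - 2, h' j = h j) : Steps n (X n (n - 1)) h h' := by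
  intro m b hb
  have hX : X n (n - 1) = x ⟨n - 1, by omega⟩ := dif_pos (by omega)
  have hl : act ⟨n - 1, by omega⟩ (label n h) = label n h' := by
    funext ⟨j, hj⟩
    simp only [act, label, Adj, IsEdge, Fin.mk.injEq]
    have := e₃ j
    have := e₃ (j + 1)
    grind
  rw [hX, ← hl]
  refine ⟨m + 1, .step _ hb ?_⟩
  simp only [label]
  rw [if_pos (by omega)]; omega

/-- A descending product `x_b ⋯ x_{a+1}` moves the entry at index `b` down to index `a`. -/
lemma Steps.run {n : ℕ} (hn : 4 ≤ n) (a b : ℕ) (hab : a ≤ b) : b < n → ∀ h h' : ℕ → ℤ,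
    (∀ i, a ≤ i → i < b → h b < h i) →
    (∀ i < n, h' i = if i < a then h i else if i = a then h b else
      if i ≤ b then h (i - 1) else h i) →
    Steps n ((((List.range b).drop a).reverse).map (X n)).prod h h' := by
  induction b, hab using Nat.le_induction with
  | base =>
    intro _ h h' _ e
    rw [List.drop_of_length_le (by simp)]
    refine Steps.one hn fun i hi => ?_
    rw [e i hi]; grind
  | succ b hab IH =>
    intro hb h h' hlt e
    rw [List.range_succ, List.drop_append_of_le_length (by simpa using hab), List.reverse_append]
    simp only [List.reverse_singleton, List.singleton_append, List.map_cons, List.prod_cons]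
    refine Steps.mul (h' := fun j => if j = b then h (b + 1) else if j = b + 1 then h b else h j)
      (Steps.swap hn hb (hlt b hab (by omega)) (by simp) (by simp) ?_) (IH (by omega) _ _ ?_ ?_)
    · intro j _ h₁ h₂; simp [h₁, h₂]
    · intro i h₁ h₂
      have := hlt i h₁ (by omega)
      grind
    · intro i hi
      have := e i hi
      grind

/-- The vector reached before the `k`-th descending block of the type `A` part of `delta`. -/
def vecA (n k : ℕ) : ℕ → ℤ := fun i =>
  if i ≤ k then (n : ℤ) - 1 - k + i else (n : ℤ) - 1 - i

/-- The vector reached before the `k`-th block of `P n`. -/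
def vecP (n k : ℕ) : ℕ → ℤ := fun i =>
  if i < k then (i : ℤ) - (n - 1) else
    if i + 1 = n ∧ k % 2 = 1 then (k : ℤ) - (n - 1) else (i : ℤ) - k

lemma steps_desc {n : ℕ} (hn : 4 ≤ n) (k : ℕ) (hk : k + 1 < n) :
    Steps n (desc n k) (vecA n k) (vecA n (k + 1)) := by
  have := Steps.run hn 0 (k + 1) (by omega) hk (vecA n k) (vecA n (k + 1))
    (by intro i _ hi; simp only [vecA]; split_ifs <;> push_cast <;> omega)
    (by intro i hi; simp only [vecA]; split_ifs <;> push_cast <;> omega)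
  simpa [desc] using this

lemma steps_block {n : ℕ} (hn : 4 ≤ n) (k : ℕ) (hk : k + 1 < n) :
    Steps n (block n k) (vecP n k) (vecP n (k + 1)) := by
  unfold block
  -- The vector after the letter `y_k`, before its new entry at index `n - 2` is moved down.
  let v : ℕ → ℤ := fun i => if i + 2 = n then (k : ℤ) - (n - 1) else
    if i + 1 = n then (if k % 2 = 0 then (k : ℤ) - (n - 2) else (n : ℤ) - 2 - k) else vecP n k i
  refine Steps.mul (h' := v) ?_ (Steps.run hn k (n - 2) (by omega) (by omega) _ _ ?_ ?_)
  · by_cases h : k % 2 = 0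
    · rw [if_pos h]
      refine Steps.last hn ?_ ?_ ?_ ?_
      · simp only [vecP]; split_ifs <;> omega
      · simp only [v, vecP]; split_ifs <;> omega
      · simp only [v, vecP]; split_ifs <;> omega
      · intro j hj; simp only [v]; split_ifs <;> omega
    · rw [if_neg h]
      refine Steps.swap hn (by omega) ?_ ?_ ?_ ?_
      · simp only [vecP]; split_ifs <;> omega
      · simp only [v, vecP]; split_ifs <;> omega
      · simp only [v, vecP]; split_ifs <;> omega
      · intro j hj h₁ h₂; simp only [v]; split_ifs <;> omega
  · intro i h₁ h₂; simp only [v, vecP]; split_ifs <;> omega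
  · intro i hi
    rcases lt_trichotomy i k with h | h | h
    · simp only [v, vecP]; grind
    · simp only [v, vecP]; grind
    · simp only [v, vecP]
      rw [if_neg (show ¬ i < k + 1 by omega), if_neg (show ¬ i < k by omega),
        if_neg (show ¬ i = k by omega), if_neg (show ¬ i - 1 < k by omega)]
      by_cases hi' : i ≤ n - 2
      · rw [if_pos hi', if_neg (show ¬ i - 1 + 2 = n by omega),
          if_neg (show ¬ i - 1 + 1 = n by omega), if_neg (show ¬ (i + 1 = n ∧ _) by omega),
          if_neg (show ¬ (i - 1 + 1 = n ∧ _) by omega)]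
        omega
      · rw [if_neg hi', if_neg (show ¬ i + 2 = n by omega), if_pos (show i + 1 = n by omega)]
        split_ifs <;> push_cast <;> omega

lemma steps_prod {n : ℕ} (hn : 4 ≤ n) (f : ℕ → M n) (v : ℕ → ℕ → ℤ) (N : ℕ)
    (H : ∀ k < N, Steps n (f k) (v k) (v (k + 1))) :
    Steps n ((List.range N).map f).prod (v 0) (v N) := by
  induction N with
  | zero => exact Steps.one hn fun _ _ => rfl
  | succ N ih =>
    rw [List.range_succ, List.map_append, List.prod_append, List.map_singleton,
      List.prod_singleton]
    exact (ih fun k hk => H k (by omega)).mul (H N (by omega))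

/-- **Corollary 3**: in the Artin monoid of type `Dₙ` (`n ≥ 4`), the element
`Δ = x₁(x₂x₁)⋯(x_{n−1}⋯x₁) · Pₙ` is the least common left multiple of the generators
`x₁,…,xₙ`, where `Pₙ = ∏_{k=1}^{n−1} (y_k x_{n−2}x_{n−3}⋯x_k)` with `y_k = xₙ` for `k`
odd and `y_k = x_{n−1}` for `k` even. -/
theorem statement10 (n : ℕ) (hn : 4 ≤ n) :
    IsLeftLcm (Set.range (x (n := n))) (delta n) := by
  have hstart : label n (vecA n 0) = fun _ => 1 := by
    funext ⟨i, hi⟩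
    simp only [label, vecA]
    split_ifs <;> push_cast <;> omega
  have hmid : Steps n 1 (vecA n (n - 1)) (vecP n 0) :=
    Steps.one hn fun i hi => by
      rw [vecA, vecP, if_pos (by omega), if_neg (by omega), if_neg (by omega)]
      push_cast [Nat.cast_sub (show 1 ≤ n by omega)]; ring
  have hall : Steps n (delta n) (vecA n 0) (vecP n (n - 1)) := by
    have h := ((steps_prod hn (desc n) (vecA n) (n - 1)
      fun k hk => steps_desc hn k (by omega)).mul hmid).mul
      (steps_prod hn (block n) (vecP n) (n - 1) fun k hk => steps_block hn k (by omega))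
    rwa [mul_one] at h
  obtain ⟨m, hm⟩ := hall 0 1 (by rw [hstart]; exact .one)
  rw [one_mul] at hm
  refine hm.isLeftLcm ?_
  rintro ⟨i, hi⟩
  simp only [label, vecP]
  split_ifs <;> omega

end ArtinD
end
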